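/- Let G be a closed subgroup of O(N) satisfying (G1) and (G2), and σ : G → {1,−1} a continuous surjective group homomorphism. Then E(·;ℝ^N) attains its minimum on the Nehari manifold N(ℝ^N)^σ_G: there exists u ∈ N(ℝ^N)^σ_G with E(u;ℝ^N) = m(ℝ^N)^σ_G. Consequently, the fractional critical Schrödinger equation has a nontrivial σ-equivariant solution: there exists u ∈ Ḣ^s(ℝ^N)^σ_G, not a.e. zero, with ⟨E'(u;ℝ^N), v⟩ = 0 for all v ∈ Ḣ^s(ℝ^N). -/

import Mathlib

open MeasureTheory Real

noncomputable section

abbrev Euc (N : ℕ) := EuclideanSpace ℝ (Fin N)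

/-- The critical exponent `2*_s = 2N/(N-2s)`. -/
def twoStar (N : ℕ) (s : ℝ) : ℝ := 2 * N / (N - 2 * s)

/-- Square of the Gagliardo seminorm `‖u‖²`. -/
def gagSq (N : ℕ) (s : ℝ) (u : Euc N → ℝ) : ℝ :=
  ∫ p : Euc N × Euc N, (u p.1 - u p.2) ^ 2 / dist p.1 p.2 ^ ((N : ℝ) + 2 * s)

/-- The Gagliardo seminorm `‖u‖`. -/
def gagNorm (N : ℕ) (s : ℝ) (u : Euc N → ℝ) : ℝ := Real.sqrt (gagSq N s u)

/-- Finiteness of the Gagliardo seminorm (`‖u‖ < ∞`). -/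
def GagFinite (N : ℕ) (s : ℝ) (u : Euc N → ℝ) : Prop :=
  Integrable (fun p : Euc N × Euc N => (u p.1 - u p.2) ^ 2 / dist p.1 p.2 ^ ((N : ℝ) + 2 * s))

/-- Membership in `Ḣ^s(Ω)`: measurable, in `L^{2*_s}(ℝ^N)`, finite Gagliardo seminorm,
and vanishing a.e. outside `Ω`. -/
structure MemHs (N : ℕ) (s : ℝ) (Ω : Set (Euc N)) (u : Euc N → ℝ) : Prop where
  meas : Measurable u
  lp : Integrable fun x : Euc N => |u x| ^ twoStar N s
  fin : GagFinite N s u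
  vanish : ∀ᵐ x : Euc N, x ∉ Ω → u x = 0

/-- The energy functional `E(u;Ω)`. -/
def energy (N : ℕ) (s : ℝ) (Ω : Set (Euc N)) (u : Euc N → ℝ) : ℝ :=
  (1 / 2) * gagSq N s u - (1 / twoStar N s) * ∫ x in Ω, |u x| ^ twoStar N s

/-- The Nehari functional `N(u;Ω)`. -/
def nehariFun (N : ℕ) (s : ℝ) (Ω : Set (Euc N)) (u : Euc N → ℝ) : ℝ :=
  gagSq N s u - ∫ x in Ω, |u x| ^ twoStar N s

/-- The pairing `⟨E'(u), v⟩` (with domain `Ω`). -/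
def pairing (N : ℕ) (s : ℝ) (Ω : Set (Euc N)) (u v : Euc N → ℝ) : ℝ :=
  (∫ p : Euc N × Euc N, (u p.1 - u p.2) * (v p.1 - v p.2) / dist p.1 p.2 ^ ((N : ℝ) + 2 * s))
    - ∫ x in Ω, |u x| ^ (twoStar N s - 2) * u x * v x

/-- The sharp fractional Sobolev constant `S(N,s)`. -/
def sobolevS (N : ℕ) (s : ℝ) : ℝ :=
  (2 : ℝ) ^ (-(2 * s)) * Real.pi ^ (-s) *
    (Real.Gamma ((N - 2 * s) / 2) / Real.Gamma ((N + 2 * s) / 2)) *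
    (Real.Gamma N / Real.Gamma (N / 2)) ^ (2 * s / N)

/-- The orthogonal group `O(N)`. -/
abbrev ONgrp (N : ℕ) := Matrix.orthogonalGroup (Fin N) ℝ

/-- The linear action of `O(N)` on `ℝ^N`. -/
def ogAct {N : ℕ} (g : ONgrp N) (x : Euc N) : Euc N :=
  Matrix.toEuclideanLin (g : Matrix (Fin N) (Fin N) ℝ) x

/-- `σ`-equivariance of `u : ℝ^N → ℝ` under a subgroup `G` of `O(N)`:
`u (g x) = σ(g) u (x)` for all `g ∈ G`, `x ∈ ℝ^N`. -/
def IsEquivariant {N : ℕ} (G : Subgroup (ONgrp N)) (σ : G →* ℤˣ) (u : Euc N → ℝ) : Prop :=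
  ∀ g : G, ∀ x : Euc N, u (ogAct (g : ONgrp N) x) = ((σ g : ℤ) : ℝ) * u x

/-- `G`-invariance of a set. -/
def IsInvariantSet {N : ℕ} (G : Subgroup (ONgrp N)) (Ω : Set (Euc N)) : Prop :=
  ∀ g : G, ∀ x ∈ Ω, ogAct (g : ONgrp N) x ∈ Ω

/-- Condition (G1): every `G`-orbit is infinite or a single point. -/
def CondG1 {N : ℕ} (G : Subgroup (ONgrp N)) : Prop :=
  ∀ x : Euc N, ({y : Euc N | ∃ g : G, ogAct (g : ONgrp N) x = y}).Infinite ∨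
    ∀ g : G, ogAct (g : ONgrp N) x = x

/-- Condition (G2): there is a point `ξ` with `σ = 1` on the stabilizer of `ξ`. -/
def CondG2 {N : ℕ} (G : Subgroup (ONgrp N)) (σ : G →* ℤˣ) : Prop :=
  ∃ ξ : Euc N, ∀ g : G, ogAct (g : ONgrp N) ξ = ξ → σ g = 1

/-- The Nehari level `m(Ω)^σ_G = inf { E(u;Ω) : u ∈ N(Ω)^σ_G }`. -/
def mval (N : ℕ) (s : ℝ) (Ω : Set (Euc N)) (G : Subgroup (ONgrp N)) (σ : G →* ℤˣ) : ℝ :=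
  sInf {c : ℝ | ∃ u : Euc N → ℝ, MemHs N s Ω u ∧ IsEquivariant G σ u ∧
    ¬ (∀ᵐ x : Euc N, u x = 0) ∧ nehariFun N s Ω u = 0 ∧ c = energy N s Ω u}

/-!
Let `S` be the best constant in the Sobolev inequality restricted to `σ`-equivariant functions. A
sharpened Sobolev inequality, in which one factor is a scale-invariant Morrey bound, shows that a
minimizing sequence carries a fixed amount of mass on some sequence of balls. By (G1), a ball far
(relative to its radius) from the fixed space of `G` has many disjoint images of equal mass, so the
balls stay near the fixed space; rescaling about fixed points keeps the functions equivariant and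
brings the mass to a bounded region. Local compactness yields a nonzero equivariant limit, and the
Brezis–Lieb splitting together with the strict concavity of `t ↦ t ^ (2 / 2*_s)` shows that the
limit is extremal. Suitably scaled, it lies on the Nehari manifold, and the equation tested against
an arbitrary `v` reduces, by Haar averaging over `G`, to the first-order condition in an equivariant
direction. Condition (G2) guarantees that nonzero equivariant functions exist: it makes the
equivariant average of a small bump at `ξ` positive at `ξ`.
-/

section

open Filter Topology Metric

section BrezisLieb

variable {E : Type*} [NormedAddCommGroup E] {q : ℝ}

lemma exists_norm_add_rpow_le (hq : 0 < q) {ε : ℝ} (hε : 0 < ε) :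
    ∃ C : ℝ, 0 ≤ C ∧ ∀ a b : E, ‖a + b‖ ^ q ≤ (1 + ε) * ‖a‖ ^ q + C * ‖b‖ ^ q := by
  have hcont : ContinuousAt (fun t : ℝ => (1 + t) ^ q) 0 :=
    (continuousAt_const.add continuousAt_id).rpow_const (Or.inr hq.le)
  have hnear : ∀ᶠ t in 𝓝[>] (0 : ℝ), (1 + t) ^ q < 1 + ε :=
    (hcont.eventually (gt_mem_nhds (by simp [hε]))).filter_mono nhdsWithin_le_nhds
  obtain ⟨δ, hδε, hδ : 0 < δ⟩ := (hnear.and self_mem_nhdsWithin).exists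
  refine ⟨(1 + 1 / δ) ^ q, by positivity, fun a b => ?_⟩
  rcases le_total ‖b‖ (δ * ‖a‖) with hab | hab
  · calc ‖a + b‖ ^ q ≤ ((1 + δ) * ‖a‖) ^ q := by
          gcongr
          linarith [norm_add_le a b]
      _ = (1 + δ) ^ q * ‖a‖ ^ q := mul_rpow (by positivity) (norm_nonneg _)
      _ ≤ (1 + ε) * ‖a‖ ^ q := by gcongr
      _ ≤ _ := le_add_of_nonneg_right (by positivity)
  · have ha : ‖a‖ ≤ 1 / δ * ‖b‖ := by
      rw [one_div, ← div_eq_inv_mul, le_div_iff₀ hδ]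
      linarith
    calc ‖a + b‖ ^ q ≤ ((1 + 1 / δ) * ‖b‖) ^ q := by
          gcongr
          linarith [norm_add_le a b]
      _ = (1 + 1 / δ) ^ q * ‖b‖ ^ q := mul_rpow (by positivity) (norm_nonneg _)
      _ ≤ _ := le_add_of_nonneg_left (by positivity)

lemma exists_abs_norm_add_rpow_sub_le (hq : 0 < q) {ε : ℝ} (hε : 0 < ε) :
    ∃ C : ℝ, 0 ≤ C ∧ ∀ a b : E,
      |‖a + b‖ ^ q - ‖a‖ ^ q - ‖b‖ ^ q| ≤ ε * ‖a‖ ^ q + C * ‖b‖ ^ q := by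
  obtain ⟨η, hη, hηlt⟩ := exists_between (lt_min one_pos (half_pos hε))
  have hη1 : η ≤ 1 := hηlt.le.trans (min_le_left _ _)
  have hηε : 2 * η ≤ ε := by linarith [hηlt.le.trans (min_le_right _ _)]
  obtain ⟨C, hC, hadd⟩ := exists_norm_add_rpow_le (E := E) hq hη
  refine ⟨2 * C + 1, by positivity, fun a b => abs_le.2 ⟨?_, ?_⟩⟩
  · have hsub : ‖a‖ ^ q ≤ (1 + η) * ‖a + b‖ ^ q + C * ‖b‖ ^ q := by
      simpa using hadd (a + b) (-b)
    have hdefect : ‖a‖ ^ q + ‖b‖ ^ q - ‖a + b‖ ^ q ≤ ε * ‖a‖ ^ q + (2 * C + 1) * ‖b‖ ^ q :=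
      calc ‖a‖ ^ q + ‖b‖ ^ q - ‖a + b‖ ^ q
          ≤ η * ‖a + b‖ ^ q + (C + 1) * ‖b‖ ^ q := by linarith
        _ ≤ η * ((1 + η) * ‖a‖ ^ q + C * ‖b‖ ^ q) + (C + 1) * ‖b‖ ^ q := by
            gcongr
            exact hadd a b
        _ = (η + η * η) * ‖a‖ ^ q + (η * C + C + 1) * ‖b‖ ^ q := by ring
        _ ≤ ε * ‖a‖ ^ q + (2 * C + 1) * ‖b‖ ^ q := by
            gcongr <;> nlinarith
    linarith
  · calc ‖a + b‖ ^ q - ‖a‖ ^ q - ‖b‖ ^ q ≤ η * ‖a‖ ^ q + (C - 1) * ‖b‖ ^ q := by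
          linarith [hadd a b]
      _ ≤ ε * ‖a‖ ^ q + (2 * C + 1) * ‖b‖ ^ q := by gcongr <;> linarith

variable {α : Type*} [MeasurableSpace α] {μ : Measure α}

lemma memLp_ofReal_iff (hq : 0 < q) {f : α → E} (hf : AEStronglyMeasurable f μ) :
    MemLp f (.ofReal q) μ ↔ Integrable (fun x => ‖f x‖ ^ q) μ := by
  rw [← integrable_norm_rpow_iff hf (by simpa using hq) ENNReal.ofReal_ne_top,
    ENNReal.toReal_ofReal hq.le]

lemma integrable_norm_rpow_of_memLp (hq : 0 < q) {f : α → E} (hf : MemLp f (.ofReal q) μ) :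
    Integrable (fun x => ‖f x‖ ^ q) μ :=
  (memLp_ofReal_iff hq hf.1).1 hf

lemma memLp_ofReal_of_tendsto_ae (hq : 0 < q) {f : ℕ → α → E} {g : α → E} {K : ℝ}
    (hf : ∀ n, MemLp (f n) (.ofReal q) μ) (hK : ∀ n, ∫ x, ‖f n x‖ ^ q ∂μ ≤ K)
    (hlim : ∀ᵐ x ∂μ, Tendsto (fun n => f n x) atTop (𝓝 (g x))) :
    MemLp g (.ofReal q) μ := by
  have hbound (n : ℕ) : eLpNorm (f n) (.ofReal q) μ ≤ ENNReal.ofReal (K ^ q⁻¹) := by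
    rw [(hf n).eLpNorm_eq_integral_rpow_norm (by simpa using hq) ENNReal.ofReal_ne_top,
      ENNReal.toReal_ofReal hq.le]
    gcongr
    exact hK n
  exact ⟨aestronglyMeasurable_of_tendsto_ae _ (fun n => (hf n).1) hlim,
    ((Lp.eLpNorm_lim_le_liminf_eLpNorm (fun n => (hf n).1) g hlim).trans
      (liminf_le_of_frequently_le' (Frequently.of_forall hbound))).trans_lt ENNReal.ofReal_lt_top⟩

lemma tendsto_integral_zero_of_tendsto_integral_excess {h d : ℕ → α → ℝ} {K : ℝ}
    (hh : ∀ n, Integrable (h n) μ) (hd : ∀ n, Integrable (d n) μ) (hK : ∀ n, ∫ x, d n x ∂μ ≤ K)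
    (hexcess : ∀ η > 0, Tendsto (fun n => ∫ x, max (|h n x| - η * d n x) 0 ∂μ) atTop (𝓝 0)) :
    Tendsto (fun n => ∫ x, h n x ∂μ) atTop (𝓝 0) := by
  rw [Metric.tendsto_nhds]
  intro ε hε
  obtain ⟨η, hη, hηK⟩ : ∃ η > 0, η * K ≤ ε / 2 := by
    refine ⟨ε / (2 * (|K| + 1)), by positivity, ?_⟩
    rw [div_mul_eq_mul_div, div_le_div_iff₀ (by positivity) two_pos]
    nlinarith [le_abs_self K]
  have hW (n : ℕ) : Integrable (fun x => max (|h n x| - η * d n x) 0) μ :=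
    ((hh n).abs.sub ((hd n).const_mul η)).pos_part
  filter_upwards [(tendsto_order.1 (hexcess η hη)).2 (ε / 2) (half_pos hε)] with n hn
  rw [Real.dist_eq, sub_zero]
  calc |∫ x, h n x ∂μ| ≤ ∫ x, |h n x| ∂μ := abs_integral_le_integral_abs
    _ ≤ ∫ x, (max (|h n x| - η * d n x) 0 + η * d n x) ∂μ :=
        integral_mono (hh n).abs ((hW n).add ((hd n).const_mul η)) fun x => by
          linarith [le_max_left (|h n x| - η * d n x) 0]
    _ = ∫ x, max (|h n x| - η * d n x) 0 ∂μ + η * ∫ x, d n x ∂μ := by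
        rw [integral_add (hW n) ((hd n).const_mul η), integral_const_mul]
    _ < ε := by linarith [mul_le_mul_of_nonneg_left (hK n) hη.le]

/- By `exists_abs_norm_add_rpow_sub_le` the integrand is dominated by `C ‖g‖ ^ q`: this is what
subtracting `η ‖f n - g‖ ^ q` buys. -/
lemma tendsto_integral_brezisLieb_excess (hq : 0 < q) {f : ℕ → α → E} {g : α → E}
    (hf : ∀ n, MemLp (f n) (.ofReal q) μ) (hg : MemLp g (.ofReal q) μ)
    (hlim : ∀ᵐ x ∂μ, Tendsto (fun n => f n x) atTop (𝓝 (g x))) {η : ℝ} (hη : 0 < η) :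
    Tendsto (fun n => ∫ x, max (|‖f n x‖ ^ q - ‖f n x - g x‖ ^ q - ‖g x‖ ^ q|
      - η * ‖f n x - g x‖ ^ q) 0 ∂μ) atTop (𝓝 0) := by
  obtain ⟨C, hC, hadd⟩ := exists_abs_norm_add_rpow_sub_le (E := E) hq hη
  have hfi (n : ℕ) := integrable_norm_rpow_of_memLp hq (hf n)
  have hdi (n : ℕ) := integrable_norm_rpow_of_memLp hq ((hf n).sub hg)
  have hgi := integrable_norm_rpow_of_memLp hq hg
  suffices Tendsto (fun n => ∫ x, max (|‖f n x‖ ^ q - ‖f n x - g x‖ ^ q - ‖g x‖ ^ q|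
      - η * ‖f n x - g x‖ ^ q) 0 ∂μ) atTop (𝓝 (∫ _, (0 : ℝ) ∂μ)) by simpa using this
  refine tendsto_integral_of_dominated_convergence (fun x => C * ‖g x‖ ^ q)
    (fun n => ((((hfi n).sub (hdi n)).sub hgi).abs.sub ((hdi n).const_mul η)).pos_part.1)
    (hgi.const_mul C) (fun n => ae_of_all _ fun x => ?_) ?_
  · rw [norm_of_nonneg (le_max_right _ _)]
    refine max_le ?_ (by positivity)
    have := hadd (f n x - g x) (g x)
    rw [sub_add_cancel] at this
    linarith
  · filter_upwards [hlim] with x hx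
    have hfx : Tendsto (fun n => ‖f n x‖ ^ q) atTop (𝓝 (‖g x‖ ^ q)) :=
      hx.norm.rpow_const (Or.inr hq.le)
    have hdx : Tendsto (fun n => ‖f n x - g x‖ ^ q) atTop (𝓝 0) := by
      simpa [zero_rpow hq.ne'] using
        ((hx.sub_const (g x)).norm).rpow_const (p := q) (Or.inr hq.le)
    simpa using ((((hfx.sub hdx).sub_const (‖g x‖ ^ q)).abs).sub (hdx.const_mul η)).max
      (tendsto_const_nhds (x := (0 : ℝ)))

theorem brezis_lieb (hq : 0 < q) {f : ℕ → α → E} {g : α → E} {K : ℝ}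
    (hf : ∀ n, MemLp (f n) (.ofReal q) μ) (hK : ∀ n, ∫ x, ‖f n x‖ ^ q ∂μ ≤ K)
    (hlim : ∀ᵐ x ∂μ, Tendsto (fun n => f n x) atTop (𝓝 (g x))) :
    Tendsto (fun n => ∫ x, ‖f n x‖ ^ q ∂μ - ∫ x, ‖f n x - g x‖ ^ q ∂μ) atTop
      (𝓝 (∫ x, ‖g x‖ ^ q ∂μ)) := by
  have hg := memLp_ofReal_of_tendsto_ae hq hf hK hlim
  have hfi (n : ℕ) := integrable_norm_rpow_of_memLp hq (hf n)
  have hdi (n : ℕ) := integrable_norm_rpow_of_memLp hq ((hf n).sub hg)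
  have hgi := integrable_norm_rpow_of_memLp hq hg
  obtain ⟨C, -, hadd⟩ := exists_norm_add_rpow_le (E := E) hq one_pos
  have hdK (n : ℕ) : ∫ x, ‖f n x - g x‖ ^ q ∂μ ≤ (1 + 1) * K + C * ∫ x, ‖g x‖ ^ q ∂μ :=
    calc ∫ x, ‖f n x - g x‖ ^ q ∂μ ≤ ∫ x, ((1 + 1) * ‖f n x‖ ^ q + C * ‖g x‖ ^ q) ∂μ :=
          integral_mono (hdi n) (((hfi n).const_mul _).add (hgi.const_mul C)) fun x => by
            simpa [sub_eq_add_neg] using hadd (f n x) (-g x)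
      _ = (1 + 1) * ∫ x, ‖f n x‖ ^ q ∂μ + C * ∫ x, ‖g x‖ ^ q ∂μ := by
          rw [integral_add ((hfi n).const_mul _) (hgi.const_mul C), integral_const_mul,
            integral_const_mul]
      _ ≤ _ := by linarith [hK n]
  have hzero := tendsto_integral_zero_of_tendsto_integral_excess
    (fun n => ((hfi n).sub (hdi n)).sub hgi) hdi hdK
    fun η hη => tendsto_integral_brezisLieb_excess hq hf hg hlim hη
  refine tendsto_sub_nhds_zero_iff.1 (hzero.congr fun n => ?_)
  rw [integral_sub' ((hfi n).sub (hdi n)) hgi, integral_sub' (hfi n) (hdi n)]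
  rfl

end BrezisLieb

section FractionalSobolevSpace

instance isAddHaarMeasure_volume_euc_prod (N : ℕ) :
    (volume : Measure (Euc N × Euc N)).IsAddHaarMeasure :=
  inferInstanceAs ((volume : Measure (Euc N)).prod (volume : Measure (Euc N))).IsAddHaarMeasure

variable {N : ℕ} {s : ℝ} {Ω : Set (Euc N)} {u v : Euc N → ℝ}

lemma two_lt_twoStar (hs0 : 0 < s) (hsN : 2 * s < N) : 2 < twoStar N s := by
  rw [twoStar, lt_div_iff₀ (by linarith)]
  linarith

lemma twoStar_pos (hs0 : 0 < s) (hsN : 2 * s < N) : 0 < twoStar N s :=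
  two_pos.trans (two_lt_twoStar hs0 hsN)

lemma half_sub_mul_twoStar (hsN : 2 * s < N) : ((N : ℝ) - 2 * s) / 2 * twoStar N s = N := by
  have : (N : ℝ) - 2 * s ≠ 0 := by linarith
  unfold twoStar
  field_simp

/-- The critical integral `∫ |u|^{2*_s}`, the second term of the Nehari functional on `ℝ^N`. -/
def critInt (N : ℕ) (s : ℝ) (u : Euc N → ℝ) : ℝ := ∫ x : Euc N, |u x| ^ twoStar N s

/-- The difference quotient of order `s`, normalized so that the Gagliardo seminorm of `u` is the
`L²` norm of `diffQuot N s u`. On the diagonal it is `0`, because the numerator vanishes there. -/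
def diffQuot (N : ℕ) (s : ℝ) (u : Euc N → ℝ) (p : Euc N × Euc N) : ℝ :=
  (u p.1 - u p.2) / dist p.1 p.2 ^ (((N : ℝ) + 2 * s) / 2)

/-- The bilinear form on `Ḣ^s` whose quadratic form is `gagSq`. -/
def gagInner (N : ℕ) (s : ℝ) (u v : Euc N → ℝ) : ℝ := ∫ p, diffQuot N s u p * diffQuot N s v p

lemma diffQuot_mul_diffQuot (u v : Euc N → ℝ) (p : Euc N × Euc N) :
    diffQuot N s u p * diffQuot N s v p =
      (u p.1 - u p.2) * (v p.1 - v p.2) / dist p.1 p.2 ^ ((N : ℝ) + 2 * s) := by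
  unfold diffQuot
  rw [div_mul_div_comm, ← sq, ← rpow_mul_natCast dist_nonneg]
  congr 2
  push_cast
  ring

lemma diffQuot_sq (u : Euc N → ℝ) (p : Euc N × Euc N) :
    diffQuot N s u p ^ 2 = (u p.1 - u p.2) ^ 2 / dist p.1 p.2 ^ ((N : ℝ) + 2 * s) := by
  rw [sq, diffQuot_mul_diffQuot, ← sq]

lemma diffQuot_add (u v : Euc N → ℝ) : diffQuot N s (u + v) = diffQuot N s u + diffQuot N s v := by
  ext p
  simp only [diffQuot, Pi.add_apply]
  ring

lemma diffQuot_const_smul (c : ℝ) (u : Euc N → ℝ) : diffQuot N s (c • u) = c • diffQuot N s u := by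
  ext p
  simp only [diffQuot, Pi.smul_apply, smul_eq_mul]
  ring

lemma measurable_diffQuot (hu : Measurable u) : Measurable (diffQuot N s u) :=
  ((hu.comp measurable_fst).sub (hu.comp measurable_snd)).div
    ((measurable_fst.dist measurable_snd).pow_const _)

lemma gagSq_eq_integral_diffQuot_sq (u : Euc N → ℝ) :
    gagSq N s u = ∫ p, diffQuot N s u p ^ 2 := by
  simp only [gagSq, diffQuot_sq]

lemma gagSq_nonneg (u : Euc N → ℝ) : 0 ≤ gagSq N s u := by
  rw [gagSq_eq_integral_diffQuot_sq]
  exact integral_nonneg fun p => sq_nonneg _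

lemma critInt_nonneg (u : Euc N → ℝ) : 0 ≤ critInt N s u :=
  integral_nonneg fun p => by positivity

lemma MemHs.memLp (hs0 : 0 < s) (hsN : 2 * s < N) (hu : MemHs N s Ω u) :
    MemLp u (.ofReal (twoStar N s)) :=
  (memLp_ofReal_iff (twoStar_pos hs0 hsN) hu.meas.aestronglyMeasurable).2 hu.lp

lemma MemHs.memLp_diffQuot (hu : MemHs N s Ω u) : MemLp (diffQuot N s u) 2 :=
  (memLp_two_iff_integrable_sq (measurable_diffQuot hu.meas).aestronglyMeasurable).2
    (by simpa only [diffQuot_sq, GagFinite] using hu.fin)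

lemma MemHs.memLp_diffQuot_ofReal (hu : MemHs N s Ω u) :
    MemLp (diffQuot N s u) (.ofReal 2) := by
  simpa using hu.memLp_diffQuot

lemma MemHs.of_memLp (hs0 : 0 < s) (hsN : 2 * s < N) (hm : Measurable u)
    (hu : MemLp u (.ofReal (twoStar N s))) (hd : MemLp (diffQuot N s u) 2)
    (hΩ : ∀ᵐ x, x ∉ Ω → u x = 0) : MemHs N s Ω u where
  meas := hm
  lp := integrable_norm_rpow_of_memLp (twoStar_pos hs0 hsN) hu
  fin := by simpa only [diffQuot_sq, GagFinite] using hd.integrable_sq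
  vanish := hΩ

lemma MemHs.const_smul (hs0 : 0 < s) (hsN : 2 * s < N) (hu : MemHs N s Ω u) (c : ℝ) :
    MemHs N s Ω (c • u) := by
  refine .of_memLp hs0 hsN (hu.meas.const_smul c) ((hu.memLp hs0 hsN).const_smul c)
    (by simpa only [diffQuot_const_smul] using hu.memLp_diffQuot.const_smul c) ?_
  filter_upwards [hu.vanish] with x hx hxΩ
  simp [hx hxΩ]

lemma MemHs.add (hs0 : 0 < s) (hsN : 2 * s < N) (hu : MemHs N s Ω u) (hv : MemHs N s Ω v) :
    MemHs N s Ω (u + v) := by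
  refine .of_memLp hs0 hsN (hu.meas.add hv.meas) ((hu.memLp hs0 hsN).add (hv.memLp hs0 hsN))
    (by simpa only [diffQuot_add] using hu.memLp_diffQuot.add hv.memLp_diffQuot) ?_
  filter_upwards [hu.vanish, hv.vanish] with x hux hvx hxΩ
  simp [hux hxΩ, hvx hxΩ]

lemma MemHs.sub (hs0 : 0 < s) (hsN : 2 * s < N) (hu : MemHs N s Ω u) (hv : MemHs N s Ω v) :
    MemHs N s Ω (u - v) := by
  simpa [sub_eq_add_neg] using hu.add hs0 hsN (hv.const_smul hs0 hsN (-1))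

lemma MemHs.integrable_diffQuot_mul (hu : MemHs N s Ω u) (hv : MemHs N s Ω v) :
    Integrable fun p => diffQuot N s u p * diffQuot N s v p :=
  hu.memLp_diffQuot.integrable_mul hv.memLp_diffQuot

lemma gagSq_const_smul (c : ℝ) (u : Euc N → ℝ) : gagSq N s (c • u) = c ^ 2 * gagSq N s u := by
  simp only [gagSq_eq_integral_diffQuot_sq, diffQuot_const_smul, Pi.smul_apply, smul_eq_mul,
    mul_pow, integral_const_mul]

lemma critInt_const_smul (c : ℝ) (u : Euc N → ℝ) :
    critInt N s (c • u) = |c| ^ twoStar N s * critInt N s u := by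
  simp only [critInt, Pi.smul_apply, smul_eq_mul, abs_mul, mul_rpow (abs_nonneg _) (abs_nonneg _),
    integral_const_mul]

lemma gagInner_const_smul_right (c : ℝ) (u v : Euc N → ℝ) :
    gagInner N s u (c • v) = c * gagInner N s u v := by
  simp only [gagInner, diffQuot_const_smul, Pi.smul_apply, smul_eq_mul, mul_left_comm,
    integral_const_mul]

lemma gagSq_add (hu : MemHs N s Ω u) (hv : MemHs N s Ω v) :
    gagSq N s (u + v) = gagSq N s u + 2 * gagInner N s u v + gagSq N s v := by
  have huu := hu.memLp_diffQuot.integrable_sq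
  have hvv := hv.memLp_diffQuot.integrable_sq
  have huv := (hu.integrable_diffQuot_mul hv).const_mul 2
  simp only [gagSq_eq_integral_diffQuot_sq, gagInner, diffQuot_add]
  rw [← integral_const_mul, ← integral_add huu huv,
    ← integral_add (huu.fun_add huv) hvv]
  congr 1 with p
  simp only [Pi.add_apply]
  ring

lemma MemHs.critInt_pos_iff (hs0 : 0 < s) (hsN : 2 * s < N) (hu : MemHs N s Ω u) :
    0 < critInt N s u ↔ ¬ ∀ᵐ x, u x = 0 := by
  rw [(critInt_nonneg u).lt_iff_ne, ne_comm, Ne, critInt,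
    integral_eq_zero_iff_of_nonneg (fun x => by positivity) hu.lp]
  refine not_congr (eventually_congr (ae_of_all _ fun x => ?_))
  rw [Pi.zero_apply, rpow_eq_zero (abs_nonneg _) (twoStar_pos hs0 hsN).ne', abs_eq_zero]

lemma MemHs.integrable_of_le_volume (hs0 : 0 < s) (hsN : 2 * s < N) (hu : MemHs N s Ω u)
    {μ : Measure (Euc N)} [IsFiniteMeasure μ] (hμ : μ ≤ volume) : Integrable u μ :=
  ((hu.memLp hs0 hsN).mono_measure hμ).integrable
    (ENNReal.one_le_ofReal.2 (one_le_two.trans (two_lt_twoStar hs0 hsN).le))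

lemma isFiniteMeasure_restrict_ball (c : Euc N) (r : ℝ) :
    IsFiniteMeasure ((volume : Measure (Euc N)).restrict (ball c r)) :=
  ⟨by simpa using measure_ball_lt_top⟩

lemma MemHs.integrableOn_ball (hs0 : 0 < s) (hsN : 2 * s < N) (hu : MemHs N s Ω u)
    (c : Euc N) (r : ℝ) : IntegrableOn u (ball c r) :=
  have := isFiniteMeasure_restrict_ball c r
  hu.integrable_of_le_volume hs0 hsN Measure.restrict_le_self

end FractionalSobolevSpace

section Rescaling

variable {N : ℕ} {s r : ℝ} {ξ : Euc N} {u : Euc N → ℝ}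

/-- The rescaling `x ↦ r^{(N-2s)/2} u(ξ + r x)`: the translations and dilations under which both
the Gagliardo seminorm and the critical integral are invariant, hence the source of the lack of
compactness in the minimization. -/
def rescale (N : ℕ) (s : ℝ) (ξ : Euc N) (r : ℝ) (u : Euc N → ℝ) (x : Euc N) : ℝ :=
  r ^ (((N : ℝ) - 2 * s) / 2) * u (ξ + r • x)

lemma abs_rescale_rpow_twoStar (hsN : 2 * s < N) (hr : 0 < r) (u : Euc N → ℝ) (x : Euc N) :
    |rescale N s ξ r u x| ^ twoStar N s = r ^ N * |u (ξ + r • x)| ^ twoStar N s := by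
  rw [rescale, abs_mul, mul_rpow (abs_nonneg _) (abs_nonneg _), abs_of_pos (by positivity),
    ← rpow_mul hr.le, half_sub_mul_twoStar hsN, rpow_natCast]

lemma diffQuot_rescale (hr : 0 < r) (u : Euc N → ℝ) (p : Euc N × Euc N) :
    diffQuot N s (rescale N s ξ r u) p = r ^ N * diffQuot N s u ((ξ, ξ) + r • p) := by
  have hdist : dist (ξ + r • p.1) (ξ + r • p.2) = r * dist p.1 p.2 := by
    rw [dist_add_left, dist_smul₀, norm_of_nonneg hr.le]
  have hexp : r ^ (((N : ℝ) - 2 * s) / 2) = r ^ N * (r ^ (((N : ℝ) + 2 * s) / 2))⁻¹ := by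
    rw [← rpow_natCast, ← rpow_neg hr.le, ← rpow_add hr]
    ring_nf
  simp only [diffQuot, rescale, Prod.fst_add, Prod.snd_add, Prod.smul_fst, Prod.smul_snd, hdist,
    mul_rpow hr.le dist_nonneg, hexp]
  field_simp

lemma integral_comp_add_smul {E : Type*} [NormedAddCommGroup E] [NormedSpace ℝ E]
    [MeasurableSpace E] [BorelSpace E] [FiniteDimensional ℝ E] (μ : Measure E)
    [μ.IsAddHaarMeasure] (hr : 0 < r) (c : E) (F : E → ℝ) :
    ∫ x, F (c + r • x) ∂μ = (r ^ Module.finrank ℝ E)⁻¹ * ∫ x, F x ∂μ := by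
  rw [Measure.integral_comp_smul_of_nonneg μ (fun x => F (c + x)) r
    (hR := hr.le), integral_add_left_eq_self F, smul_eq_mul]

lemma critInt_rescale (hsN : 2 * s < N) (hr : 0 < r) (u : Euc N → ℝ) :
    critInt N s (rescale N s ξ r u) = critInt N s u := by
  simp only [critInt, abs_rescale_rpow_twoStar hsN hr]
  rw [integral_const_mul, integral_comp_add_smul volume hr ξ fun x => |u x| ^ twoStar N s,
    finrank_euclideanSpace_fin, mul_inv_cancel_left₀ (by positivity)]

lemma gagSq_rescale (hr : 0 < r) (u : Euc N → ℝ) :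
    gagSq N s (rescale N s ξ r u) = gagSq N s u := by
  simp only [gagSq_eq_integral_diffQuot_sq, diffQuot_rescale hr, mul_pow]
  rw [integral_const_mul, integral_comp_add_smul volume hr (ξ, ξ) fun p => diffQuot N s u p ^ 2,
    Module.finrank_prod, finrank_euclideanSpace_fin, pow_add, ← sq,
    mul_inv_cancel_left₀ (by positivity)]

lemma MemHs.rescale (hs0 : 0 < s) (hsN : 2 * s < N) (hr : 0 < r) (hu : MemHs N s Set.univ u)
    (ξ : Euc N) : MemHs N s Set.univ (rescale N s ξ r u) := by
  have hm : Measurable (_root_.rescale N s ξ r u) :=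
    (hu.meas.comp (by fun_prop : Measurable fun x : Euc N => ξ + r • x)).const_mul _
  refine .of_memLp hs0 hsN hm ?_ ?_ (by simp)
  · refine (memLp_ofReal_iff (twoStar_pos hs0 hsN) hm.aestronglyMeasurable).2 ?_
    simp only [norm_eq_abs, abs_rescale_rpow_twoStar hsN hr]
    exact ((hu.lp.comp_add_left ξ).comp_smul hr.ne').const_mul _
  · refine (memLp_two_iff_integrable_sq (measurable_diffQuot hm).aestronglyMeasurable).2 ?_
    simp only [diffQuot_rescale hr, mul_pow]
    exact ((hu.memLp_diffQuot.integrable_sq.comp_add_left (ξ, ξ)).comp_smul hr.ne').const_mul _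

lemma setIntegral_ball_abs_rescale (hr : 0 < r) (u : Euc N → ℝ) (z : Euc N) :
    ∫ x in ball z 1, |rescale N s ξ r u x| =
      r ^ (-(((N : ℝ) + 2 * s) / 2)) * ∫ x in ball (ξ + r • z) r, |u x| := by
  have hball (x : Euc N) : x ∈ ball z 1 ↔ ξ + r • x ∈ ball (ξ + r • z) r := by
    rw [mem_ball, mem_ball, dist_add_left, dist_smul₀, norm_of_nonneg hr.le,
      mul_lt_iff_lt_one_right hr]
  have hindicator (x : Euc N) : (ball z 1).indicator (fun x => |rescale N s ξ r u x|) x =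
      r ^ (((N : ℝ) - 2 * s) / 2) *
        (ball (ξ + r • z) r).indicator (fun x => |u x|) (ξ + r • x) := by
    by_cases hx : x ∈ ball z 1
    · rw [Set.indicator_of_mem hx, Set.indicator_of_mem ((hball x).1 hx), rescale, abs_mul,
        abs_of_pos (by positivity)]
    · rw [Set.indicator_of_notMem hx, Set.indicator_of_notMem (mt (hball x).2 hx), mul_zero]
  have hexp : r ^ (((N : ℝ) - 2 * s) / 2) * (r ^ N)⁻¹ = r ^ (-(((N : ℝ) + 2 * s) / 2)) := by
    rw [← rpow_natCast, ← rpow_neg hr.le, ← rpow_add hr]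
    ring_nf
  rw [← integral_indicator measurableSet_ball, ← integral_indicator measurableSet_ball]
  simp only [hindicator]
  rw [integral_const_mul, integral_comp_add_smul volume hr ξ, finrank_euclideanSpace_fin,
    ← mul_assoc, hexp]

end Rescaling

section Sobolev

variable {N : ℕ} {s r : ℝ} {u : Euc N → ℝ}

lemma integral_norm_rpow_le {α E : Type*} [MeasurableSpace α] [NormedAddCommGroup E]
    {μ : Measure α} [IsFiniteMeasure μ] {q : ℝ} (hq : 1 ≤ q) {f : α → E} (hf : Integrable f μ)
    (hfq : Integrable (fun x => ‖f x‖ ^ q) μ) :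
    (∫ x, ‖f x‖ ∂μ) ^ q ≤ μ.real Set.univ ^ (q - 1) * ∫ x, ‖f x‖ ^ q ∂μ := by
  rcases eq_zero_or_neZero μ with rfl | h
  · simp [zero_rpow (by linarith : q ≠ 0)]
  have hV : 0 < μ.real Set.univ := measureReal_univ_pos
  have hJensen := (convexOn_rpow hq).map_average_le (μ := μ) (f := fun x => ‖f x‖)
    (continuousOn_id.rpow_const fun x _ => Or.inr (by linarith)) isClosed_Ici
    (ae_of_all _ fun x => norm_nonneg (f x)) hf.norm hfq
  simp only [average_eq, smul_eq_mul] at hJensen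
  rw [mul_rpow (by positivity) (integral_nonneg fun x => norm_nonneg _), inv_rpow hV.le,
    ← div_eq_inv_mul, ← div_eq_inv_mul, div_le_div_iff₀ (by positivity) hV] at hJensen
  rw [rpow_sub_one hV.ne', div_mul_eq_mul_div, le_div_iff₀ hV, mul_comm (_ ^ (q : ℝ)) (∫ x, _ ∂μ)]
  exact hJensen

/-- The volume of the unit ball of `ℝ^N`. -/
def unitVol (N : ℕ) : ℝ := (volume : Measure (Euc N)).real (ball 0 1)

lemma unitVol_pos (N : ℕ) : 0 < unitVol N :=
  ENNReal.toReal_pos (measure_ball_pos _ _ one_pos).ne' measure_ball_lt_top.ne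

lemma volume_real_ball (c : Euc N) (hr : 0 < r) :
    (volume : Measure (Euc N)).real (ball c r) = unitVol N * r ^ N := by
  rw [unitVol, measureReal_def, Measure.addHaar_ball_of_pos _ _ hr, ENNReal.toReal_mul,
    ENNReal.toReal_ofReal (by positivity), finrank_euclideanSpace_fin, mul_comm, measureReal_def]

lemma MemHs.setIntegral_ball_rpow_le {Ω : Set (Euc N)} (hs0 : 0 < s) (hsN : 2 * s < N)
    (hu : MemHs N s Ω u) (c : Euc N) (hr : 0 < r) :
    (∫ x in ball c r, |u x|) ^ twoStar N s ≤
      (unitVol N * r ^ N) ^ (twoStar N s - 1) * ∫ x in ball c r, |u x| ^ twoStar N s := by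
  have := isFiniteMeasure_restrict_ball c r
  simpa only [measureReal_restrict_apply_univ, volume_real_ball c hr, norm_eq_abs] using
    integral_norm_rpow_le (one_le_two.trans (two_lt_twoStar hs0 hsN).le)
      (hu.integrableOn_ball hs0 hsN c r) hu.lp.integrableOn

/-- The slice `x ↦ ∫ |u(x) - u(y)|² / |x - y|^{N+2s} dy` of the Gagliardo seminorm: a pointwise
measure of the oscillation of `u` around `x`. -/
def gagSlice (N : ℕ) (s : ℝ) (u : Euc N → ℝ) (x : Euc N) : ℝ := ∫ y, diffQuot N s u (x, y) ^ 2

lemma gagSlice_nonneg (u : Euc N → ℝ) (x : Euc N) : 0 ≤ gagSlice N s u x :=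
  integral_nonneg fun _ => sq_nonneg _

lemma MemHs.integrable_gagSlice {Ω : Set (Euc N)} (hu : MemHs N s Ω u) :
    Integrable (gagSlice N s u) :=
  Integrable.integral_prod_left (μ := volume) (ν := volume) hu.memLp_diffQuot.integrable_sq

lemma MemHs.integral_gagSlice {Ω : Set (Euc N)} (hu : MemHs N s Ω u) :
    ∫ x, gagSlice N s u x = gagSq N s u := by
  rw [gagSq_eq_integral_diffQuot_sq]
  exact (integral_prod (μ := volume) (ν := volume) _ hu.memLp_diffQuot.integrable_sq).symm

lemma MemHs.ae_integrable_diffQuot_sq {Ω : Set (Euc N)} (hu : MemHs N s Ω u) :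
    ∀ᵐ x, Integrable fun y => diffQuot N s u (x, y) ^ 2 :=
  Integrable.prod_right_ae (μ := volume) (ν := volume) hu.memLp_diffQuot.integrable_sq

lemma sq_sub_le_mul_diffQuot_sq (hs0 : 0 < s) (u : Euc N → ℝ) {x y : Euc N} (h : dist x y ≤ r) :
    |u x - u y| ^ (2 : ℝ) ≤ r ^ ((N : ℝ) + 2 * s) * diffQuot N s u (x, y) ^ 2 := by
  rw [rpow_two, sq_abs, diffQuot_sq]
  rcases eq_or_ne x y with rfl | hxy
  · simp
  have hpos : 0 < dist x y := dist_pos.2 hxy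
  rw [mul_div_assoc', le_div_iff₀ (by positivity), mul_comm]
  gcongr

/-- The constant in the bound of the mean oscillation over balls by `gagSlice`. -/
def oscConst (N : ℕ) (s : ℝ) : ℝ := √(unitVol N * 2 ^ ((N : ℝ) + 2 * s))

lemma setIntegral_ball_sq_sub_le (hs0 : 0 < s) (hm : Measurable u) {x c : Euc N}
    (hxc : dist x c < r) (hx : Integrable fun y => diffQuot N s u (x, y) ^ 2) :
    IntegrableOn (fun y => |u x - u y| ^ (2 : ℝ)) (ball c r) ∧
      ∫ y in ball c r, |u x - u y| ^ (2 : ℝ) ≤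
        (2 * r) ^ ((N : ℝ) + 2 * s) * gagSlice N s u x := by
  have hr : 0 < r := dist_nonneg.trans_lt hxc
  have hle : ∀ y ∈ ball c r, |u x - u y| ^ (2 : ℝ) ≤
      (2 * r) ^ ((N : ℝ) + 2 * s) * diffQuot N s u (x, y) ^ 2 := fun y hy =>
    sq_sub_le_mul_diffQuot_sq hs0 u
      (by linarith [dist_triangle_right x y c, mem_ball.1 hy])
  have hbound := hx.const_mul ((2 * r) ^ ((N : ℝ) + 2 * s))
  have hint : IntegrableOn (fun y => |u x - u y| ^ (2 : ℝ)) (ball c r) := by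
    refine hbound.integrableOn.mono' ((hm.const_sub _).norm.pow_const _).aestronglyMeasurable ?_
    filter_upwards [ae_restrict_mem measurableSet_ball] with y hy
    rw [norm_of_nonneg (by positivity)]
    exact hle y hy
  refine ⟨hint, (setIntegral_mono_on hint hbound.integrableOn measurableSet_ball hle).trans ?_⟩
  rw [gagSlice, ← integral_const_mul]
  exact setIntegral_le_integral hbound (ae_of_all _ fun y => by positivity)

lemma setIntegral_ball_abs_sub_le (hs0 : 0 < s) (hm : Measurable u) {x c : Euc N}
    (hxc : dist x c < r) (hx : Integrable fun y => diffQuot N s u (x, y) ^ 2)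
    (hu : IntegrableOn u (ball c r)) :
    ∫ y in ball c r, |u x - u y| ≤ r ^ N * (oscConst N s * r ^ s * √(gagSlice N s u x)) := by
  have hr : 0 < r := dist_nonneg.trans_lt hxc
  have hω := unitVol_pos N
  have := isFiniteMeasure_restrict_ball c r
  obtain ⟨hint, hle⟩ := setIntegral_ball_sq_sub_le hs0 hm hxc hx
  have hJensen : (∫ y in ball c r, |u x - u y|) ^ (2 : ℝ) ≤
      (unitVol N * r ^ N) ^ ((2 : ℝ) - 1) * ∫ y in ball c r, |u x - u y| ^ (2 : ℝ) := by
    simpa only [measureReal_restrict_apply_univ, volume_real_ball c hr, norm_eq_abs] using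
      integral_norm_rpow_le (f := fun y => u x - u y) one_le_two
        ((integrable_const (u x)).sub hu) hint
  have hexp : r ^ ((N : ℝ) + 2 * s) = r ^ N * (r ^ s) ^ 2 := by
    rw [rpow_add hr, rpow_natCast, mul_comm 2 s, rpow_mul hr.le, rpow_two]
  refine le_of_sq_le_sq ?_ (by unfold oscConst; positivity)
  calc (∫ y in ball c r, |u x - u y|) ^ 2
      = (∫ y in ball c r, |u x - u y|) ^ (2 : ℝ) := (rpow_two _).symm
    _ ≤ (unitVol N * r ^ N) ^ ((2 : ℝ) - 1) *
        ((2 * r) ^ ((N : ℝ) + 2 * s) * gagSlice N s u x) := hJensen.trans (by gcongr)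
    _ = (r ^ N * (oscConst N s * r ^ s * √(gagSlice N s u x))) ^ 2 := by
      rw [mul_rpow two_pos.le hr.le, hexp, oscConst, mul_pow, mul_pow, mul_pow,
        sq_sqrt (by positivity), sq_sqrt (gagSlice_nonneg u x), show (2 : ℝ) - 1 = 1 by norm_num,
        rpow_one]
      ring

lemma unitVol_mul_abs_le (hs0 : 0 < s) (hm : Measurable u) {x : Euc N} (hr : 0 < r)
    (hx : Integrable fun y => diffQuot N s u (x, y) ^ 2) (hu : IntegrableOn u (ball x r)) :
    r ^ N * (unitVol N * |u x|) ≤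
      r ^ N * (oscConst N s * r ^ s * √(gagSlice N s u x)) + ∫ y in ball x r, |u y| := by
  have := isFiniteMeasure_restrict_ball x r
  have hsub : IntegrableOn (fun y => |u x - u y|) (ball x r) :=
    ((integrable_const (u x)).sub hu).abs
  calc r ^ N * (unitVol N * |u x|) = ∫ _ in ball x r, |u x| := by
        rw [setIntegral_const, volume_real_ball x hr, smul_eq_mul]
        ring
    _ ≤ ∫ y in ball x r, (|u x - u y| + |u y|) :=
        integral_mono (integrable_const _) (hsub.fun_add hu.abs) fun y => by
          simpa using abs_add_le (u x - u y) (u y)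
    _ = (∫ y in ball x r, |u x - u y|) + ∫ y in ball x r, |u y| := integral_add hsub hu.abs
    _ ≤ _ := by gcongr; exact setIntegral_ball_abs_sub_le hs0 hm (by simpa using hr) hx hu

lemma two_mul_div_mul_twoStar (hs0 : 0 < s) (hsN : 2 * s < N) :
    2 / (N : ℝ) * s * twoStar N s = twoStar N s - 2 := by
  have hN : (0 : ℝ) < N := by linarith
  have hNs : (N : ℝ) - 2 * s ≠ 0 := by linarith
  unfold twoStar
  field_simp
  ring

lemma rpow_twoStar_le_of_forall_pos (hs0 : 0 < s) (hsN : 2 * s < N) {K M a d ω : ℝ}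
    (hω : 0 < ω) (hK : 0 ≤ K) (hM : 0 < M) (ha : 0 ≤ a) (hd : 0 ≤ d)
    (h : ∀ r : ℝ, 0 < r → ω * a ≤ K * r ^ s * d + M * r ^ (s - (N : ℝ) / 2)) :
    a ^ twoStar N s ≤ ((K + 1) / ω) ^ twoStar N s * M ^ (twoStar N s - 2) * d ^ 2 := by
  have hp := twoStar_pos hs0 hsN
  have hN : (0 : ℝ) < N := by linarith
  suffices hpos : ∀ e ∈ Set.Ioi d,
      a ^ twoStar N s ≤ ((K + 1) / ω) ^ twoStar N s * M ^ (twoStar N s - 2) * e ^ 2 from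
    ge_of_tendsto (Continuous.continuousWithinAt (s := Set.Ioi d) (x := d)
      (f := fun e => _ * e ^ 2) (by fun_prop)) (eventually_mem_nhdsWithin.mono hpos)
  intro e hde
  have he : 0 < e := hd.trans_lt hde
  -- The two terms on the right of `h` balance at this radius.
  set r : ℝ := (M / e) ^ (2 / (N : ℝ))
  have hr : 0 < r := by positivity
  have hbalance : M * r ^ (s - (N : ℝ) / 2) = r ^ s * e := by
    have hrN : r ^ ((N : ℝ) / 2) = M / e := by
      rw [← rpow_mul (by positivity), div_mul_div_cancel₀ hN.ne', div_self two_ne_zero, rpow_one]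
    rw [rpow_sub hr, hrN]
    field_simp
  have ha_le : a ≤ (K + 1) / ω * (r ^ s * e) := by
    have hKd : K * r ^ s * d ≤ K * r ^ s * e := by gcongr; exact hde.le
    rw [div_mul_eq_mul_div, le_div_iff₀ hω]
    linarith [h r hr]
  have hscale : (r ^ s * e) ^ twoStar N s = M ^ (twoStar N s - 2) * e ^ 2 := by
    rw [mul_rpow (by positivity) he.le, ← rpow_mul hr.le, ← rpow_mul (by positivity), ← mul_assoc,
      two_mul_div_mul_twoStar hs0 hsN, div_rpow hM.le he.le, rpow_sub he, rpow_two]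
    field_simp
  calc a ^ twoStar N s ≤ ((K + 1) / ω * (r ^ s * e)) ^ twoStar N s := by gcongr
    _ = _ := by rw [mul_rpow (by positivity) (by positivity), hscale, mul_assoc]

-- The refinement of the Sobolev inequality by a Morrey norm.
lemma exists_critInt_le_of_ball_bound (hs0 : 0 < s) (hsN : 2 * s < N) :
    ∃ C : ℝ, 0 < C ∧ ∀ (u : Euc N → ℝ) (M : ℝ), MemHs N s Set.univ u → 0 < M →
      (∀ (c : Euc N) (r : ℝ), 0 < r →
        ∫ x in ball c r, |u x| ≤ M * r ^ (((N : ℝ) + 2 * s) / 2)) →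
      critInt N s u ≤ C * M ^ (twoStar N s - 2) * gagSq N s u := by
  have hω := unitVol_pos N
  have hK : 0 ≤ oscConst N s := sqrt_nonneg _
  refine ⟨((oscConst N s + 1) / unitVol N) ^ twoStar N s, by positivity,
    fun u M hu hM hball => ?_⟩
  rw [← hu.integral_gagSlice, ← integral_const_mul]
  refine integral_mono_ae hu.lp (hu.integrable_gagSlice.const_mul _) ?_
  filter_upwards [hu.ae_integrable_diffQuot_sq] with x hx
  have hbound (r : ℝ) (hr : 0 < r) : unitVol N * |u x| ≤
      oscConst N s * r ^ s * √(gagSlice N s u x) + M * r ^ (s - (N : ℝ) / 2) := by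
    have hexp : r ^ (((N : ℝ) + 2 * s) / 2) = r ^ N * r ^ (s - (N : ℝ) / 2) := by
      rw [← rpow_natCast, ← rpow_add hr]
      ring_nf
    refine le_of_mul_le_mul_left ?_ (by positivity : 0 < r ^ N)
    linear_combination unitVol_mul_abs_le hs0 hu.meas hr hx (hu.integrableOn_ball hs0 hsN x r) +
      hball x r hr + M * hexp
  simpa only [sq_sqrt (gagSlice_nonneg u x)] using
    rpow_twoStar_le_of_forall_pos hs0 hsN hω hK hM (abs_nonneg (u x)) (sqrt_nonneg _) hbound

lemma MemHs.setIntegral_ball_abs_le {Ω : Set (Euc N)} (hs0 : 0 < s) (hsN : 2 * s < N)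
    (hu : MemHs N s Ω u) (c : Euc N) (hr : 0 < r) :
    ∫ x in ball c r, |u x| ≤ unitVol N ^ (1 - (twoStar N s)⁻¹) *
      critInt N s u ^ (twoStar N s)⁻¹ * r ^ (((N : ℝ) + 2 * s) / 2) := by
  have hω := unitVol_pos N
  have hp := twoStar_pos hs0 hsN
  have hN : (r ^ N) ^ (1 - (twoStar N s)⁻¹) = r ^ (((N : ℝ) + 2 * s) / 2) := by
    rw [← rpow_natCast, ← rpow_mul hr.le]
    congr 1
    linear_combination (twoStar N s)⁻¹ * half_sub_mul_twoStar hsN -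
      ((N : ℝ) - 2 * s) / 2 * mul_inv_cancel₀ hp.ne'
  have hpow : (∫ x in ball c r, |u x|) ^ twoStar N s ≤
      (unitVol N * r ^ N) ^ (twoStar N s - 1) * critInt N s u :=
    (hu.setIntegral_ball_rpow_le hs0 hsN c hr).trans <| by
      gcongr
      exact setIntegral_le_integral hu.lp (ae_of_all _ fun x => by positivity)
  refine ((le_rpow_inv_iff_of_pos (integral_nonneg fun x => abs_nonneg (u x))
    (mul_nonneg (by positivity) (critInt_nonneg u)) hp).2 hpow).trans_eq ?_
  rw [mul_rpow (by positivity) (critInt_nonneg u), ← rpow_mul (by positivity), sub_mul, one_mul,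
    mul_inv_cancel₀ hp.ne', mul_rpow hω.le (by positivity), hN]
  ring

theorem exists_sobolev (hs0 : 0 < s) (hsN : 2 * s < N) :
    ∃ C : ℝ, 0 < C ∧ ∀ u : Euc N → ℝ, MemHs N s Set.univ u →
      critInt N s u ^ (2 / twoStar N s) ≤ C * gagSq N s u := by
  obtain ⟨C, hC, hrefined⟩ := exists_critInt_le_of_ball_bound hs0 hsN
  have hp := twoStar_pos hs0 hsN
  have hω := unitVol_pos N
  set p := twoStar N s
  refine ⟨C * (unitVol N ^ (1 - p⁻¹)) ^ (p - 2), by positivity, fun u hu => ?_⟩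
  rcases (critInt_nonneg (s := s) u).eq_or_lt with hzero | hcrit
  · rw [← hzero, zero_rpow (by positivity)]
    exact mul_nonneg (by positivity) (gagSq_nonneg u)
  have hle := hrefined u _ hu
    (by positivity : 0 < unitVol N ^ (1 - p⁻¹) * critInt N s u ^ p⁻¹)
    fun c _ => hu.setIntegral_ball_abs_le hs0 hsN c
  have hsplit :
      critInt N s u ^ (2 / p) * (critInt N s u ^ p⁻¹) ^ (p - 2) = critInt N s u := by
    rw [← rpow_mul hcrit.le, ← rpow_add hcrit]
    convert rpow_one _ using 2
    field_simp
    ring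
  rw [mul_rpow (by positivity) (by positivity)] at hle
  refine le_of_mul_le_mul_right ?_ (by positivity : 0 < (critInt N s u ^ p⁻¹) ^ (p - 2))
  linear_combination hle + hsplit

end Sobolev

section LocalCompactness

lemma exists_subseq_tendsto_pi {ι : Type*} [Countable ι] {a : ℕ → ι → ℝ} {b : ι → ℝ}
    (h : ∀ n i, |a n i| ≤ b i) :
    ∃ φ : ℕ → ℕ, StrictMono φ ∧ ∃ l : ι → ℝ, ∀ i, Tendsto (fun n => a (φ n) i) atTop (𝓝 (l i)) := by
  have hcompact : IsCompact (Set.pi Set.univ fun i => Set.Icc (-b i) (b i)) :=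
    isCompact_univ_pi fun i => isCompact_Icc
  obtain ⟨l, -, φ, hφ, hl⟩ := hcompact.tendsto_subseq (x := a) fun n i _ => abs_le.1 (h n i)
  exact ⟨φ, hφ, l, tendsto_pi_nhds.1 hl⟩

lemma cauchySeq_of_forall_exists_cauchySeq_dist_le {X : Type*} [PseudoMetricSpace X] {v : ℕ → X}
    (h : ∀ ε > 0, ∃ w : ℕ → X, CauchySeq w ∧ ∀ n, dist (v n) (w n) ≤ ε) : CauchySeq v := by
  refine Metric.cauchySeq_iff.2 fun ε hε => ?_
  obtain ⟨w, hw, hvw⟩ := h (ε / 4) (by positivity)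
  obtain ⟨n₀, hn₀⟩ := Metric.cauchySeq_iff.1 hw (ε / 4) (by positivity)
  refine ⟨n₀, fun m hm n hn => ?_⟩
  linarith [dist_triangle4 (v m) (w m) (w n) (v n), hvw m, hn₀ m hm n hn,
    (dist_comm (w n) (v n)).trans_le (hvw n)]

lemma exists_measurable_dist_denseSeq_lt (X : Type*) [PseudoMetricSpace X] [MeasurableSpace X]
    [OpensMeasurableSpace X] [TopologicalSpace.SeparableSpace X] [Nonempty X] {r : ℝ} (hr : 0 < r) :
    ∃ j : X → ℕ, Measurable j ∧ ∀ x, dist x (TopologicalSpace.denseSeq X (j x)) < r := by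
  classical
  have hdense (x : X) := (TopologicalSpace.denseRange_denseSeq X).exists_dist_lt x hr
  exact ⟨fun x => Nat.find (hdense x), measurable_find _ fun k => measurableSet_ball,
    fun x => Nat.find_spec (hdense x)⟩

section L1

variable {α : Type*} [MeasurableSpace α] {ν : Measure α}

lemma dist_toL1_toL1 {f g : α → ℝ} (hf : Integrable f ν) (hg : Integrable g ν) :
    dist (hf.toL1 f) (hg.toL1 g) = ∫ x, |f x - g x| ∂ν := by
  rw [dist_eq_norm, ← Integrable.toL1_sub, L1.norm_of_fun_eq_integral_norm]
  rfl

lemma cauchySeq_toL1_of_tendsto [IsFiniteMeasure ν] {f : ℕ → α → ℝ} {g : α → ℝ} {b : ℝ}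
    (hf : ∀ n, Measurable (f n)) (hb : ∀ n x, |f n x| ≤ b)
    (hlim : ∀ x, Tendsto (fun n => f n x) atTop (𝓝 (g x))) :
    ∃ hint : ∀ n, Integrable (f n) ν, CauchySeq fun n => (hint n).toL1 (f n) := by
  have hgb (x : α) : |g x| ≤ b := le_of_tendsto (hlim x).abs (Eventually.of_forall fun n => hb n x)
  have hint (n : ℕ) : Integrable (f n) ν :=
    .of_bound (hf n).aestronglyMeasurable b (ae_of_all _ (hb n))
  have hg : Integrable g ν := .of_bound
    (measurable_of_tendsto_metrizable hf (tendsto_pi_nhds.2 hlim)).aestronglyMeasurable b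
    (ae_of_all _ hgb)
  refine ⟨hint, (tendsto_iff_dist_tendsto_zero (a := hg.toL1 g).2 ?_).cauchySeq⟩
  simp only [dist_toL1_toL1]
  rw [← integral_zero α ℝ (μ := ν)]
  refine tendsto_integral_of_dominated_convergence (fun _ => b + b)
    (fun n => ((hint n).sub hg).abs.aestronglyMeasurable) (integrable_const _)
    (fun n => ae_of_all _ fun x => ?_) (ae_of_all _ fun x => ?_)
  · rw [norm_eq_abs, abs_abs]
    exact (abs_sub _ _).trans (add_le_add (hb n x) (hgb x))
  · simpa using ((hlim x).sub_const (g x)).abs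

end L1

variable {N : ℕ} {s : ℝ} {Ω : Set (Euc N)}

lemma MemHs.abs_sub_average_le (hs0 : 0 < s) (hsN : 2 * s < N) {u : Euc N → ℝ}
    (hu : MemHs N s Ω u) {r : ℝ} {x c : Euc N} (hxc : dist x c < r)
    (hx : Integrable fun y => diffQuot N s u (x, y) ^ 2) :
    |u x - (unitVol N * r ^ N)⁻¹ * ∫ y in ball c r, u y| ≤
      oscConst N s / unitVol N * r ^ s * (1 + gagSlice N s u x) := by
  have hr : 0 < r := dist_nonneg.trans_lt hxc
  have := isFiniteMeasure_restrict_ball c r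
  have hω := unitVol_pos N
  have hK : 0 ≤ oscConst N s := sqrt_nonneg _
  have hslice := gagSlice_nonneg (s := s) u x
  have hui := hu.integrableOn_ball hs0 hsN c r
  have hsqrt : √(gagSlice N s u x) ≤ 1 + gagSlice N s u x := by
    rw [sqrt_le_left (by linarith)]
    nlinarith
  have haverage : u x - (unitVol N * r ^ N)⁻¹ * ∫ y in ball c r, u y =
      (unitVol N * r ^ N)⁻¹ * ∫ y in ball c r, (u x - u y) := by
    rw [integral_sub (integrable_const _) hui, setIntegral_const, volume_real_ball c hr,
      smul_eq_mul]
    field_simp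
  rw [haverage, abs_mul, abs_of_pos (by positivity), inv_mul_le_iff₀ (by positivity)]
  calc |∫ y in ball c r, (u x - u y)| ≤ ∫ y in ball c r, |u x - u y| :=
        abs_integral_le_integral_abs
    _ ≤ r ^ N * (oscConst N s * r ^ s * √(gagSlice N s u x)) :=
        setIntegral_ball_abs_sub_le hs0 hu.meas hxc hx hui
    _ ≤ r ^ N * (oscConst N s * r ^ s * (1 + gagSlice N s u x)) := by gcongr
    _ = _ := by field_simp

lemma MemHs.integral_abs_sub_average_le (hs0 : 0 < s) (hsN : 2 * s < N) {u : Euc N → ℝ}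
    (hu : MemHs N s Ω u) {ν : Measure (Euc N)} [IsFiniteMeasure ν] (hν : ν ≤ volume) {r : ℝ}
    {c : Euc N → Euc N} (hc : ∀ x, dist x (c x) < r) :
    ∫ x, |u x - (unitVol N * r ^ N)⁻¹ * ∫ y in ball (c x) r, u y| ∂ν ≤
      oscConst N s / unitVol N * r ^ s * (ν.real Set.univ + gagSq N s u) := by
  have hr : 0 < r := dist_nonneg.trans_lt (hc 0)
  have hω := unitVol_pos N
  have hK : 0 ≤ oscConst N s := sqrt_nonneg _
  have hslice : Integrable (gagSlice N s u) ν := hu.integrable_gagSlice.mono_measure hν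
  have hslice_le : ∫ x, gagSlice N s u x ∂ν ≤ gagSq N s u :=
    hu.integral_gagSlice ▸
      integral_mono_measure hν (ae_of_all _ (gagSlice_nonneg u)) hu.integrable_gagSlice
  calc ∫ x, |u x - (unitVol N * r ^ N)⁻¹ * ∫ y in ball (c x) r, u y| ∂ν
      ≤ ∫ x, oscConst N s / unitVol N * r ^ s * (1 + gagSlice N s u x) ∂ν := by
        refine integral_mono_of_nonneg (ae_of_all _ fun x => abs_nonneg _)
          (((integrable_const 1).add hslice).const_mul _) ?_
        filter_upwards [ae_mono hν hu.ae_integrable_diffQuot_sq] with x hx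
        exact hu.abs_sub_average_le hs0 hsN (hc x) hx
    _ = oscConst N s / unitVol N * r ^ s * (ν.real Set.univ + ∫ x, gagSlice N s u x ∂ν) := by
        rw [integral_const_mul, integral_add (integrable_const _) hslice]
        simp
    _ ≤ _ := by gcongr

lemma MemHs.abs_average_le (hs0 : 0 < s) (hsN : 2 * s < N) {u : Euc N → ℝ} {B : ℝ}
    (hu : MemHs N s Ω u) (hB : critInt N s u ≤ B) (c : Euc N) {r : ℝ} (hr : 0 < r) :
    |(unitVol N * r ^ N)⁻¹ * ∫ y in ball c r, u y| ≤ (unitVol N * r ^ N)⁻¹ *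
      (unitVol N ^ (1 - (twoStar N s)⁻¹) * B ^ (twoStar N s)⁻¹ *
        r ^ (((N : ℝ) + 2 * s) / 2)) := by
  have hω := unitVol_pos N
  have hp := twoStar_pos hs0 hsN
  have hcrit := critInt_nonneg (s := s) u
  rw [abs_mul, abs_of_pos (by positivity)]
  gcongr
  exact abs_integral_le_integral_abs.trans
    ((hu.setIntegral_ball_abs_le hs0 hsN c hr).trans (by gcongr))

-- At each scale the functions are uniformly `L¹`-close to their means over countably many balls,
-- and those means converge along a diagonal subsequence.
lemma exists_subseq_cauchySeq_toL1 (hs0 : 0 < s) (hsN : 2 * s < N) {u : ℕ → Euc N → ℝ} {A B : ℝ}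
    (hu : ∀ n, MemHs N s Ω (u n)) (hA : ∀ n, gagSq N s (u n) ≤ A)
    (hB : ∀ n, critInt N s (u n) ≤ B) {ν : Measure (Euc N)} [IsFiniteMeasure ν]
    (hν : ν ≤ volume) :
    ∃ φ : ℕ → ℕ, StrictMono φ ∧
      CauchySeq fun n => ((hu (φ n)).integrable_of_le_volume hs0 hsN hν).toL1 (u (φ n)) := by
  have hω := unitVol_pos N
  have hK : 0 ≤ oscConst N s := sqrt_nonneg _
  set ρ : ℕ → ℝ := fun k => 1 / ((k : ℝ) + 1)
  have hρ (k : ℕ) : 0 < ρ k := by positivity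
  choose j hj hdist using fun k => exists_measurable_dist_denseSeq_lt (Euc N) (hρ k)
  set mean : ℕ → ℕ × ℕ → ℝ := fun n i => (unitVol N * ρ i.1 ^ N)⁻¹ *
    ∫ y in ball (TopologicalSpace.denseSeq (Euc N) i.2) (ρ i.1), u n y
  obtain ⟨φ, hφ, l, hl⟩ := exists_subseq_tendsto_pi (a := mean)
    fun n i => (hu n).abs_average_le hs0 hsN (hB n) _ (hρ i.1)
  refine ⟨φ, hφ, cauchySeq_of_forall_exists_cauchySeq_dist_le fun ε hε => ?_⟩
  have hρlim : Tendsto (fun k => oscConst N s / unitVol N * ρ k ^ s * (ν.real Set.univ + A)) atTop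
      (𝓝 0) := by
    have := tendsto_one_div_add_atTop_nhds_zero_nat.rpow_const (p := s) (Or.inr hs0.le)
    simpa [ρ, zero_rpow hs0.ne'] using
      (this.const_mul (oscConst N s / unitVol N)).mul_const (ν.real Set.univ + A)
  obtain ⟨k, hk⟩ := (hρlim.eventually (gt_mem_nhds hε)).exists
  obtain ⟨hint, hcauchy⟩ := cauchySeq_toL1_of_tendsto (ν := ν)
    (fun n => (measurable_of_countable fun i => mean (φ n) (k, i)).comp (hj k))
    (fun n x => (hu (φ n)).abs_average_le hs0 hsN (hB (φ n)) _ (hρ k)) (fun x => hl (k, j k x))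
  refine ⟨_, hcauchy, fun n => ?_⟩
  rw [dist_toL1_toL1]
  refine ((hu (φ n)).integral_abs_sub_average_le hs0 hsN hν (hdist k)).trans (le_trans ?_ hk.le)
  have := hρ k
  gcongr
  exact hA _

/-- An integrable weight on `ℝ^N` with values in `(0, 1]`. -/
def weight (N : ℕ) (x : Euc N) : ℝ := (1 + ‖x‖) ^ (-((N : ℝ) + 1))

lemma weight_pos (x : Euc N) : 0 < weight N x := by
  unfold weight
  positivity

lemma weight_le_one (x : Euc N) : weight N x ≤ 1 :=
  rpow_le_one_of_one_le_of_nonpos (by linarith [norm_nonneg x])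
    (by linarith [(Nat.cast_nonneg N : (0 : ℝ) ≤ N)])

lemma continuous_weight : Continuous (weight N) :=
  (continuous_const.add continuous_norm).rpow_const fun x =>
    Or.inl (by linarith [norm_nonneg x] : (0 : ℝ) < 1 + ‖x‖).ne'

lemma integrable_weight : Integrable (weight N) :=
  integrable_one_add_norm (by rw [finrank_euclideanSpace_fin]; linarith)

/-- A finite measure on `ℝ^N` below Lebesgue measure, with the same null sets, and comparable to it
on every ball: convergence in `L¹` of this measure encodes local convergence. -/
def weightMeasure (N : ℕ) : Measure (Euc N) :=
  volume.withDensity fun x => ENNReal.ofReal (weight N x)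

instance isFiniteMeasure_weightMeasure : IsFiniteMeasure (weightMeasure N) :=
  isFiniteMeasure_withDensity_ofReal integrable_weight.2

lemma weightMeasure_le_volume : weightMeasure N ≤ volume := by
  conv_rhs => rw [← withDensity_one (μ := (volume : Measure (Euc N)))]
  exact withDensity_mono (ae_of_all _ fun x => by simpa using weight_le_one x)

lemma volume_absolutelyContinuous_weightMeasure :
    (volume : Measure (Euc N)) ≪ weightMeasure N :=
  withDensity_absolutelyContinuous' continuous_weight.measurable.ennreal_ofReal.aemeasurable
    (ae_of_all _ fun x => by simpa using weight_pos x)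

lemma restrict_ball_le_smul_weightMeasure (R : ℝ) :
    (volume : Measure (Euc N)).restrict (ball 0 R) ≤
      ENNReal.ofReal ((1 + R) ^ ((N : ℝ) + 1)) • weightMeasure N := by
  rw [weightMeasure, ← withDensity_smul _ continuous_weight.measurable.ennreal_ofReal,
    ← withDensity_indicator_one measurableSet_ball]
  refine withDensity_mono (ae_of_all _ fun x => Set.indicator_le (fun x hx => ?_) x)
  rw [mem_ball_zero_iff] at hx
  have hx0 : 0 < 1 + ‖x‖ := by positivity
  rw [Pi.one_apply, Pi.smul_apply, smul_eq_mul, ← ENNReal.ofReal_mul (by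
    have : 0 < 1 + R := by linarith
    positivity), ENNReal.one_le_ofReal, weight, rpow_neg hx0.le, ← div_eq_mul_inv,
    one_le_div (by positivity)]
  gcongr

lemma exists_setIntegral_ball_abs_le_weightMeasure (N : ℕ) (R : ℝ) :
    ∃ C : ℝ, ∀ f : Euc N → ℝ, Integrable f (weightMeasure N) → IntegrableOn f (ball 0 R) ∧
      ∫ x in ball 0 R, |f x| ≤ C * ∫ x, |f x| ∂weightMeasure N := by
  refine ⟨(ENNReal.ofReal ((1 + R) ^ ((N : ℝ) + 1))).toReal, fun f hf => ?_⟩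
  have hsmul := hf.smul_measure (c := ENNReal.ofReal ((1 + R) ^ ((N : ℝ) + 1)))
    ENNReal.ofReal_ne_top
  refine ⟨hsmul.mono_measure (restrict_ball_le_smul_weightMeasure R), ?_⟩
  rw [← smul_eq_mul, ← integral_smul_measure]
  exact integral_mono_measure (restrict_ball_le_smul_weightMeasure R)
    (ae_of_all _ fun x => abs_nonneg _) hsmul.abs

theorem exists_subseq_tendsto_ae (hs0 : 0 < s) (hsN : 2 * s < N) {u : ℕ → Euc N → ℝ} {A B : ℝ}
    (hu : ∀ n, MemHs N s Ω (u n)) (hA : ∀ n, gagSq N s (u n) ≤ A)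
    (hB : ∀ n, critInt N s (u n) ≤ B) :
    ∃ φ : ℕ → ℕ, StrictMono φ ∧ ∃ g : Euc N → ℝ,
      (∀ᵐ x, Tendsto (fun n => u (φ n) x) atTop (𝓝 (g x))) ∧
      ∀ R, Tendsto (fun n => ∫ x in ball 0 R, |u (φ n) x|) atTop (𝓝 (∫ x in ball 0 R, |g x|)) := by
  obtain ⟨φ, hφ, hcauchy⟩ :=
    exists_subseq_cauchySeq_toL1 hs0 hsN hu hA hB weightMeasure_le_volume
  have hint (n : ℕ) := (hu (φ n)).integrable_of_le_volume hs0 hsN weightMeasure_le_volume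
  obtain ⟨G, hG⟩ := cauchySeq_tendsto_of_complete hcauchy
  obtain ⟨ψ, hψ, hae⟩ := (tendstoInMeasure_of_tendsto_Lp hG).exists_seq_tendsto_ae
  refine ⟨φ ∘ ψ, hφ.comp hψ, G, volume_absolutelyContinuous_weightMeasure.ae_le ?_, fun R => ?_⟩
  · filter_upwards [hae, ae_all_iff.2 fun n => (hint (ψ n)).coeFn_toL1] with x hx hcoe
    simpa only [hcoe, Function.comp_apply] using hx
  have hGint := L1.integrable_coeFn G
  have hlim : Tendsto (fun n => ∫ x, |u (φ n) x - G x| ∂weightMeasure N) atTop (𝓝 0) := by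
    rw [← Integrable.toL1_coeFn G hGint, tendsto_iff_dist_tendsto_zero] at hG
    simpa only [dist_toL1_toL1] using hG
  obtain ⟨C, hC⟩ := exists_setIntegral_ball_abs_le_weightMeasure N R
  have hdist : Tendsto (fun n => C * ∫ x, |u (φ (ψ n)) x - G x| ∂weightMeasure N) atTop (𝓝 0) := by
    simpa using (hlim.comp hψ.tendsto_atTop).const_mul C
  refine tendsto_iff_dist_tendsto_zero.2
    (squeeze_zero (fun n => dist_nonneg) (fun n => ?_) hdist)
  have huR := (hC _ (hint (ψ n))).1
  have hGR := (hC _ hGint).1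
  obtain ⟨hR, hle⟩ := hC _ ((hint (ψ n)).sub hGint)
  refine le_trans ?_ hle
  rw [Function.comp_apply, Real.dist_eq, ← integral_sub huR.abs hGR.abs]
  exact abs_integral_le_integral_abs.trans
    (integral_mono (huR.abs.sub hGR.abs).abs hR.abs fun x => abs_abs_sub_abs_le _ _)

end LocalCompactness

section Symmetry

variable {N : ℕ} {s : ℝ} {G : Subgroup (ONgrp N)} {σ : G →* ℤˣ} {u v : Euc N → ℝ}

lemma ogAct_one (x : Euc N) : ogAct (1 : ONgrp N) x = x := by
  ext i
  simp [ogAct]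

lemma ogAct_mul (g h : ONgrp N) (x : Euc N) : ogAct (g * h) x = ogAct g (ogAct h x) := by
  ext i
  simp [ogAct, Matrix.mulVec_mulVec]

lemma norm_ogAct (g : ONgrp N) (x : Euc N) : ‖ogAct g x‖ = ‖x‖ := by
  rw [← sq_eq_sq₀ (norm_nonneg _) (norm_nonneg _), ← real_inner_self_eq_norm_sq,
    ← real_inner_self_eq_norm_sq, ogAct, ← LinearMap.adjoint_inner_left,
    ← Matrix.toEuclideanLin_conjTranspose_eq_adjoint, ← Matrix.star_eq_conjTranspose]
  congr 1
  ext i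
  simp [Matrix.mulVec_mulVec, Matrix.UnitaryGroup.star_mul_self g]

/-- The action of an orthogonal matrix as a linear isometric equivalence. -/
def ogIso (g : ONgrp N) : Euc N ≃ₗᵢ[ℝ] Euc N where
  toFun := ogAct g
  invFun := ogAct g⁻¹
  map_add' x y := by simp [ogAct]
  map_smul' c x := by simp [ogAct]
  left_inv x := by rw [← ogAct_mul, inv_mul_cancel, ogAct_one]
  right_inv x := by rw [← ogAct_mul, mul_inv_cancel, ogAct_one]
  norm_map' := norm_ogAct g

lemma ogAct_add (g : ONgrp N) (x y : Euc N) : ogAct g (x + y) = ogAct g x + ogAct g y :=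
  (ogIso g).map_add x y

lemma ogAct_smul (g : ONgrp N) (c : ℝ) (x : Euc N) : ogAct g (c • x) = c • ogAct g x :=
  (ogIso g).map_smul c x

lemma dist_ogAct (g : ONgrp N) (x y : Euc N) : dist (ogAct g x) (ogAct g y) = dist x y :=
  (ogIso g).dist_map x y

lemma measurePreserving_ogAct (g : ONgrp N) : MeasurePreserving (ogAct g) :=
  (ogIso g).measurePreserving

lemma measurableEmbedding_ogAct (g : ONgrp N) : MeasurableEmbedding (ogAct g) :=
  (ogIso g).toHomeomorph.measurableEmbedding

lemma abs_coe_intUnits (ε : ℤˣ) : |((ε : ℤ) : ℝ)| = 1 := by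
  rcases Int.units_eq_one_or ε with h | h <;> simp [h]

lemma IsEquivariant.add (hu : IsEquivariant G σ u) (hv : IsEquivariant G σ v) :
    IsEquivariant G σ (u + v) := fun g x => by
  rw [Pi.add_apply, Pi.add_apply, hu g x, hv g x, mul_add]

lemma IsEquivariant.const_smul (hu : IsEquivariant G σ u) (c : ℝ) :
    IsEquivariant G σ (c • u) := fun g x => by
  rw [Pi.smul_apply, Pi.smul_apply, hu g x, smul_eq_mul, smul_eq_mul, mul_left_comm]

lemma IsEquivariant.abs_apply_ogAct (hu : IsEquivariant G σ u) (g : G) (x : Euc N) :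
    |u (ogAct (g : ONgrp N) x)| = |u x| := by
  rw [hu g x, abs_mul, abs_coe_intUnits, one_mul]

lemma IsEquivariant.setIntegral_ball_ogAct (hu : IsEquivariant G σ u) (g : G) (x : Euc N)
    (r q : ℝ) :
    ∫ y in ball (ogAct (g : ONgrp N) x) r, |u y| ^ q = ∫ y in ball x r, |u y| ^ q := by
  have h_preimage : ogAct (g : ONgrp N) ⁻¹' ball (ogAct (g : ONgrp N) x) r = ball x r :=
    (ogIso (g : ONgrp N)).isometry.preimage_ball x r
  rw [← (measurePreserving_ogAct (g : ONgrp N)).setIntegral_preimage_emb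
    (measurableEmbedding_ogAct _), h_preimage]
  simp_rw [hu.abs_apply_ogAct]

/-- The subspace of points fixed by `G`. -/
def fixedSpace (G : Subgroup (ONgrp N)) : Submodule ℝ (Euc N) where
  carrier := {x | ∀ g : G, ogAct (g : ONgrp N) x = x}
  add_mem' hx hy g := by rw [ogAct_add, hx g, hy g]
  zero_mem' g := (ogIso (g : ONgrp N)).map_zero
  smul_mem' c x hx g := by rw [ogAct_smul, hx g]

lemma IsEquivariant.rescale (hu : IsEquivariant G σ u) {ξ : Euc N} (hξ : ξ ∈ fixedSpace G)
    (r : ℝ) : IsEquivariant G σ (rescale N s ξ r u) := fun g x => by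
  have h : ξ + r • ogAct (g : ONgrp N) x = ogAct (g : ONgrp N) (ξ + r • x) := by
    rw [ogAct_add, ogAct_smul, hξ g]
  rw [_root_.rescale, _root_.rescale, h, hu g, mul_left_comm]

lemma exists_pos_pairwise_le_dist {ι X : Type*} [Finite ι] [MetricSpace X] {x : ι → X}
    (hx : Function.Injective x) : ∃ d > 0, Pairwise fun i j => d ≤ dist (x i) (x j) := by
  have h : ∀ᶠ d in 𝓝[>] (0 : ℝ), ∀ i j, i ≠ j → d ≤ dist (x i) (x j) := by
    refine eventually_all.2 fun i => eventually_all.2 fun j => ?_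
    by_cases hij : i = j
    · exact Eventually.of_forall fun _ h => absurd hij h
    · filter_upwards [mem_nhdsWithin_of_mem_nhds (ge_mem_nhds (dist_pos.2 (hx.ne hij)))]
        with d hd _ using hd
  obtain ⟨d, hd, hd_le⟩ := (eventually_mem_nhdsWithin (s := Set.Ioi (0 : ℝ))).and h |>.exists
  exact ⟨d, hd, fun i j => hd_le i j⟩

lemma exists_pairwise_le_dist_ogAct_near (hG1 : CondG1 G) (k : ℕ) {z : Euc N}
    (hz : z ∉ fixedSpace G) : ∃ δ > 0, ∃ g : Fin k → G, ∀ y ∈ ball z δ,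
      Pairwise fun i j => δ ≤ dist (ogAct (g i : ONgrp N) y) (ogAct (g j : ONgrp N) y) := by
  obtain ⟨t, ht, htk⟩ := ((hG1 z).resolve_right hz).exists_subset_card_eq k
  let e : Fin k ≃ t := (t.equivFinOfCardEq htk).symm
  choose g hg using fun i => ht (e i).2
  have h_inj : Function.Injective fun i => ogAct (g i : ONgrp N) z := fun i j hij =>
    e.injective (Subtype.ext (by rw [← hg i, ← hg j]; exact hij))
  obtain ⟨d, hd0, hd⟩ := exists_pos_pairwise_le_dist h_inj
  refine ⟨d / 3, by positivity, g, fun y hy i j hij => ?_⟩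
  have h_far := hd hij
  have h_tri := dist_triangle4 (ogAct (g i : ONgrp N) z) (ogAct (g i : ONgrp N) y)
    (ogAct (g j : ONgrp N) y) (ogAct (g j : ONgrp N) z)
  rw [dist_ogAct, dist_ogAct, dist_comm z] at h_tri
  rw [mem_ball] at hy
  linarith

lemma exists_pairwise_le_dist_ogAct_on_compact (hG1 : CondG1 G) (k : ℕ) {K : Set (Euc N)}
    (hK : IsCompact K) (hKG : ∀ z ∈ K, z ∉ fixedSpace G) :
    ∃ δ > 0, ∀ z ∈ K, ∃ g : Fin k → G,
      Pairwise fun i j => δ ≤ dist (ogAct (g i : ONgrp N) z) (ogAct (g j : ONgrp N) z) := by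
  refine hK.induction_on (p := fun S => ∃ δ > 0, ∀ z ∈ S, ∃ g : Fin k → G,
    Pairwise fun i j => δ ≤ dist (ogAct (g i : ONgrp N) z) (ogAct (g j : ONgrp N) z))
    ⟨1, one_pos, by simp⟩ ?_ ?_ ?_
  · rintro S T hST ⟨δ, hδ, h⟩
    exact ⟨δ, hδ, fun z hz => h z (hST hz)⟩
  · rintro S T ⟨δ, hδ, h⟩ ⟨δ', hδ', h'⟩
    refine ⟨min δ δ', lt_min hδ hδ', ?_⟩
    rintro z (hz | hz)
    · obtain ⟨g, hg⟩ := h z hz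
      exact ⟨g, fun i j hij => (min_le_left _ _).trans (hg hij)⟩
    · obtain ⟨g, hg⟩ := h' z hz
      exact ⟨g, fun i j hij => (min_le_right _ _).trans (hg hij)⟩
  · intro z hz
    obtain ⟨δ, hδ, g, hg⟩ := exists_pairwise_le_dist_ogAct_near hG1 k (hKG z hz)
    exact ⟨_, mem_nhdsWithin_of_mem_nhds (ball_mem_nhds z hδ), δ, hδ, fun y hy => ⟨g, hg y hy⟩⟩

lemma exists_pairwise_two_le_dist_ogAct (hG1 : CondG1 G) (k : ℕ) :
    ∃ R : ℝ, ∀ z ∈ (fixedSpace G)ᗮ, R ≤ ‖z‖ → ∃ g : Fin k → G,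
      Pairwise fun i j => 2 ≤ dist (ogAct (g i : ONgrp N) z) (ogAct (g j : ONgrp N) z) := by
  have hK : IsCompact (sphere (0 : Euc N) 1 ∩ ((fixedSpace G)ᗮ : Set (Euc N))) :=
    (isCompact_sphere _ _).inter_right (Submodule.isClosed_orthogonal _)
  obtain ⟨δ, hδ, h⟩ := exists_pairwise_le_dist_ogAct_on_compact hG1 k hK <| by
    rintro z ⟨hz1, hz⟩ hzG
    have hz0 : z = 0 := inner_self_eq_zero.1 (Submodule.inner_right_of_mem_orthogonal hzG hz)
    simp [hz0] at hz1
  refine ⟨2 / δ, fun z hz hR => ?_⟩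
  have hz0 : 0 < ‖z‖ := lt_of_lt_of_le (by positivity) hR
  obtain ⟨g, hg⟩ := h (‖z‖⁻¹ • z) ⟨by simp [norm_smul, hz0.ne'], Submodule.smul_mem _ _ hz⟩
  refine ⟨g, fun i j hij => ?_⟩
  have h_dist : δ ≤ dist _ _ := hg hij
  rw [ogAct_smul, ogAct_smul, dist_smul₀, norm_inv, norm_norm, inv_mul_eq_div,
    le_div_iff₀ hz0] at h_dist
  rw [div_le_iff₀ hδ] at hR
  linarith

-- Far from the fixed space a unit ball has many disjoint images under `G`, all carrying the same
-- mass, while the total mass is at most one.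
lemma exists_norm_le_of_le_setIntegral_ball (hs0 : 0 < s) (hsN : 2 * s < N) (hG1 : CondG1 G)
    {M : ℝ} (hM : 0 < M) : ∃ R : ℝ, ∀ u : Euc N → ℝ, MemHs N s Set.univ u →
      IsEquivariant G σ u → critInt N s u ≤ 1 → ∀ z ∈ (fixedSpace G)ᗮ,
      M ≤ ∫ x in ball z 1, |u x| → ‖z‖ ≤ R := by
  have hp := two_lt_twoStar hs0 hsN
  have hω := unitVol_pos N
  obtain ⟨k, hk⟩ := exists_nat_gt (unitVol N ^ (twoStar N s - 1) / M ^ twoStar N s)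
  obtain ⟨R, h⟩ := exists_pairwise_two_le_dist_ogAct hG1 k
  refine ⟨R, fun u hu hσu hu1 z hz hMz => ?_⟩
  by_contra! hRz
  obtain ⟨g, hg⟩ := h z hz hRz.le
  have h_mass : k * ∫ x in ball z 1, |u x| ^ twoStar N s ≤ 1 := by
    calc k * ∫ x in ball z 1, |u x| ^ twoStar N s
        = ∑ i, ∫ x in ball (ogAct (g i : ONgrp N) z) 1, |u x| ^ twoStar N s := by
          simp only [hσu.setIntegral_ball_ogAct, Finset.sum_const, Finset.card_univ,
            Fintype.card_fin, nsmul_eq_mul]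
      _ = ∫ x in ⋃ i, ball (ogAct (g i : ONgrp N) z) 1, |u x| ^ twoStar N s :=
          (integral_iUnion_fintype (fun _ => measurableSet_ball) (fun i j hij =>
            ball_disjoint_ball (by linarith [hg hij])) fun _ => hu.lp.integrableOn).symm
      _ ≤ 1 := (setIntegral_le_integral hu.lp (ae_of_all _ fun x => by positivity)).trans hu1
  have h_jensen : M ^ twoStar N s ≤
      unitVol N ^ (twoStar N s - 1) * ∫ x in ball z 1, |u x| ^ twoStar N s := by
    have h := hu.setIntegral_ball_rpow_le hs0 hsN z one_pos
    rw [one_pow, mul_one] at h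
    exact (rpow_le_rpow hM.le hMz (by linarith)).trans h
  rw [div_lt_iff₀ (by positivity)] at hk
  have hV : 0 < unitVol N ^ (twoStar N s - 1) := by positivity
  nlinarith [mul_le_mul_of_nonneg_left h_jensen k.cast_nonneg,
    mul_le_mul_of_nonneg_left h_mass hV.le]

end Symmetry

section Averaging

variable {Γ X : Type*} [MeasurableSpace Γ] [MeasurableSpace X] {μ : Measure Γ}
  [IsProbabilityMeasure μ] {ν : Measure X} [SFinite ν] {T : Γ → X → X} {ε : Γ → ℝ} {q : ℝ}
  {F U : X → ℝ}

lemma measurePreserving_uncurry (hT : Measurable (Function.uncurry T))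
    (hTν : ∀ g, MeasurePreserving (T g) ν ν) :
    MeasurePreserving (Function.uncurry T) (μ.prod ν) ν :=
  measurePreserving_snd.comp <| (MeasurePreserving.id μ).skew_product hT
    (ae_of_all _ fun g => (hTν g).map_eq)

lemma ae_integrable_comp_action (hT : Measurable (Function.uncurry T))
    (hTν : ∀ g, MeasurePreserving (T g) ν ν) (hq : 1 ≤ q) (hF : MemLp F (.ofReal q) ν) :
    ∀ᵐ x ∂ν, Integrable (fun g => F (T g x)) μ := by
  have hq0 : 0 < q := one_pos.trans_le hq
  have h := hF.comp_measurePreserving (measurePreserving_uncurry (μ := μ) hT hTν)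
  filter_upwards [h.1.prodMk_right, (integrable_norm_rpow_of_memLp hq0 h).prod_left_ae]
    with x hm hx
  exact ((memLp_ofReal_iff hq0 hm).2 hx).integrable (ENNReal.one_le_ofReal.2 hq)

lemma measurable_average (hT : Measurable (Function.uncurry T)) (hε : Measurable ε)
    (hF : Measurable F) : Measurable fun x => ∫ g, ε g * F (T g x) ∂μ := by
  refine (StronglyMeasurable.integral_prod_left (f := fun g x => ε g * F (T g x)) ?_).measurable
  exact ((hε.comp measurable_fst).mul (hF.comp hT)).stronglyMeasurable

lemma memLp_average (hT : Measurable (Function.uncurry T))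
    (hTν : ∀ g, MeasurePreserving (T g) ν ν) (hε : Measurable ε) (hε1 : ∀ g, |ε g| ≤ 1)
    (hq : 1 ≤ q) (hFm : Measurable F) (hF : MemLp F (.ofReal q) ν) :
    MemLp (fun x => ∫ g, ε g * F (T g x) ∂μ) (.ofReal q) ν := by
  have hq0 : 0 < q := one_pos.trans_le hq
  have h_prod := integrable_norm_rpow_of_memLp hq0 <|
    hF.comp_measurePreserving (measurePreserving_uncurry (μ := μ) hT hTν)
  have hm := (measurable_average (μ := μ) hT hε hFm).aestronglyMeasurable (μ := ν)
  refine (memLp_ofReal_iff hq0 hm).2 <| h_prod.integral_prod_right.mono'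
    (hm.norm.aemeasurable.pow_const q).aestronglyMeasurable ?_
  filter_upwards [h_prod.prod_left_ae, ae_integrable_comp_action (μ := μ) hT hTν hq hF]
    with x hxq hx
  have h_jensen := integral_norm_rpow_le hq hx hxq
  rw [probReal_univ, one_rpow, one_mul] at h_jensen
  rw [norm_of_nonneg (by positivity)]
  refine (rpow_le_rpow (norm_nonneg _) ?_ hq0.le).trans h_jensen
  refine norm_integral_le_of_norm_le hx.norm (ae_of_all _ fun g => ?_)
  rw [norm_mul]
  exact mul_le_of_le_one_left (norm_nonneg _) (hε1 g)

lemma integral_mul_average (hT : Measurable (Function.uncurry T))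
    (hTν : ∀ g, MeasurePreserving (T g) ν ν) (hU : ∀ g x, ε g * U x = U (T g x))
    (hUF : Integrable (fun x => U x * F x) ν) :
    ∫ x, U x * ∫ g, ε g * F (T g x) ∂μ ∂ν = ∫ x, U x * F x ∂ν := by
  have hmp := measurePreserving_uncurry (μ := μ) hT hTν
  calc ∫ x, U x * ∫ g, ε g * F (T g x) ∂μ ∂ν
      = ∫ x, ∫ g, U (T g x) * F (T g x) ∂μ ∂ν := by
        simp only [← integral_const_mul, ← hU, mul_assoc, mul_left_comm]
    _ = ∫ z, U (T z.1 z.2) * F (T z.1 z.2) ∂μ.prod ν :=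
        (integral_prod_symm _ (hmp.integrable_comp_of_integrable hUF)).symm
    _ = ∫ x, U x * F x ∂ν := by
        conv_rhs => rw [← hmp.map_eq]
        exact (integral_map hmp.aemeasurable (hmp.map_eq.symm ▸ hUF.1)).symm

end Averaging

section EquivariantAverage

variable {N : ℕ} {s : ℝ} {G : Subgroup (ONgrp N)} {σ : G →* ℤˣ} {u v : Euc N → ℝ}

lemma compactSpace_orthogonalGroup (N : ℕ) : CompactSpace (ONgrp N) := by
  have h_closed : IsClosed (Matrix.orthogonalGroup (Fin N) ℝ : Set (Matrix (Fin N) (Fin N) ℝ)) := by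
    have h_eq : (Matrix.orthogonalGroup (Fin N) ℝ : Set (Matrix (Fin N) (Fin N) ℝ)) =
        {A | star A * A = 1} := Set.ext fun A => Matrix.mem_unitaryGroup_iff'
    rw [h_eq]
    exact isClosed_eq (by fun_prop) continuous_const
  have h_cube : IsCompact (Set.pi Set.univ fun _ : Fin N => Set.pi Set.univ fun _ : Fin N =>
      closedBall (0 : ℝ) 1) :=
    isCompact_univ_pi fun _ => isCompact_univ_pi fun _ => isCompact_closedBall _ _
  refine isCompact_iff_compactSpace.1 (h_cube.of_isClosed_subset h_closed fun A hA i _ j _ => ?_)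
  simpa using entry_norm_bound_of_unitary hA i j

lemma exists_isHaarMeasure_isProbabilityMeasure (hG : IsClosed (G : Set (ONgrp N)))
    [MeasurableSpace G] [BorelSpace G] :
    ∃ μ : Measure G, μ.IsHaarMeasure ∧ IsProbabilityMeasure μ := by
  have := compactSpace_orthogonalGroup N
  have : CompactSpace G := isCompact_iff_compactSpace.1 hG.isCompact
  exact ⟨Measure.haarMeasure ⊤, inferInstance, ⟨Measure.haarMeasure_self⟩⟩

lemma continuous_ogAct : Continuous fun p : ONgrp N × Euc N => ogAct p.1 p.2 := by
  refine (PiLp.continuous_toLp 2 _).comp (continuous_pi fun i => ?_)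
  exact continuous_finsetSum Finset.univ fun j _ =>
    ((continuous_subtype_val.comp continuous_fst).matrix_elem i j).mul
      ((PiLp.continuous_apply 2 _ j).comp continuous_snd)

/-- The action of `g⁻¹` on `ℝ^N`, for `g` in a subgroup of `O(N)`. -/
def invAct (G : Subgroup (ONgrp N)) (g : G) (x : Euc N) : Euc N := ogAct (g⁻¹ : G) x

/-- The sign character with real values. -/
def realSign (σ : G →* ℤˣ) (g : G) : ℝ := ((σ g : ℤ) : ℝ)

lemma abs_realSign (g : G) : |realSign σ g| = 1 := abs_coe_intUnits _

lemma continuous_realSign (hσ : Continuous σ) : Continuous (realSign σ) :=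
  continuous_of_discreteTopology.comp (Units.continuous_val.comp hσ)

lemma continuous_invAct : Continuous (Function.uncurry (invAct G)) := by
  have h : Continuous fun p : G × Euc N => (((p.1⁻¹ : G) : ONgrp N), p.2) :=
    (continuous_subtype_val.comp (continuous_inv.comp continuous_fst)).prodMk continuous_snd
  simpa only [Function.comp_def, Function.uncurry_def, invAct] using continuous_ogAct.comp h

lemma measurePreserving_invAct (g : G) : MeasurePreserving (invAct G g) :=
  measurePreserving_ogAct _

lemma measurePreserving_prodMap_invAct (g : G) :
    MeasurePreserving (Prod.map (invAct G g) (invAct G g)) :=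
  (measurePreserving_invAct g).prod (measurePreserving_invAct g)

lemma diffQuot_prodMap_invAct (u : Euc N → ℝ) (g : G) (p : Euc N × Euc N) :
    diffQuot N s u (Prod.map (invAct G g) (invAct G g) p) =
      (u (invAct G g p.1) - u (invAct G g p.2)) / dist p.1 p.2 ^ (((N : ℝ) + 2 * s) / 2) := by
  rw [diffQuot, Prod.map_fst, Prod.map_snd, invAct, invAct, dist_ogAct]

lemma IsEquivariant.realSign_mul (hu : IsEquivariant G σ u) (g : G) (x : Euc N) :
    realSign σ g * u x = u (invAct G g x) := by
  rw [invAct, hu, realSign, map_inv, Int.units_inv_eq_self]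

lemma IsEquivariant.realSign_mul_diffQuot (hu : IsEquivariant G σ u) (g : G)
    (p : Euc N × Euc N) : realSign σ g * diffQuot N s u p =
      diffQuot N s u (Prod.map (invAct G g) (invAct G g) p) := by
  rw [diffQuot_prodMap_invAct, ← hu.realSign_mul, ← hu.realSign_mul, diffQuot, ← mul_sub,
    mul_div_assoc]

lemma IsEquivariant.realSign_mul_abs_rpow_mul (hu : IsEquivariant G σ u) (q : ℝ) (g : G)
    (x : Euc N) :
    realSign σ g * (|u x| ^ q * u x) = |u (invAct G g x)| ^ q * u (invAct G g x) := by
  rw [← hu.realSign_mul, abs_mul, abs_realSign, one_mul, mul_left_comm]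

variable [MeasurableSpace G] [BorelSpace G] {μ : Measure G}

lemma measurable_invAct : Measurable (Function.uncurry (invAct G)) :=
  continuous_invAct.measurable

lemma measurable_prodMap_invAct :
    Measurable (Function.uncurry fun g : G => Prod.map (invAct G g) (invAct G g)) := by
  have h₁ := measurable_invAct.comp
    (measurable_fst.prodMk (measurable_fst.comp measurable_snd) :
      Measurable fun z : G × (Euc N × Euc N) => (z.1, z.2.1))
  have h₂ := measurable_invAct.comp
    (measurable_fst.prodMk (measurable_snd.comp measurable_snd) :
      Measurable fun z : G × (Euc N × Euc N) => (z.1, z.2.2))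
  simpa only [Function.comp_def, Function.uncurry_def, Prod.map_def] using h₁.prodMk h₂

/-- The average of `g ↦ σ(g) v(g⁻¹ x)` over `G`. For the Haar probability measure `μ` this is the
projection of `v` onto the `σ`-equivariant functions. -/
def equivariantAverage (σ : G →* ℤˣ) (μ : Measure G) (v : Euc N → ℝ) (x : Euc N) : ℝ :=
  ∫ g, realSign σ g * v (invAct G g x) ∂μ

lemma isEquivariant_equivariantAverage [μ.IsMulLeftInvariant] (v : Euc N → ℝ) :
    IsEquivariant G σ (equivariantAverage σ μ v) := fun h x => by
  have h_act (g : G) : invAct G (h * g) (ogAct (h : ONgrp N) x) = invAct G g x := by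
    simp only [invAct, ← ogAct_mul, ← Subgroup.coe_mul, mul_inv_rev, inv_mul_cancel_right]
  have h_sign (g : G) : realSign σ (h * g) = ((σ h : ℤ) : ℝ) * realSign σ g := by
    rw [realSign, realSign, map_mul, Units.val_mul, Int.cast_mul]
  rw [equivariantAverage, equivariantAverage, ← integral_mul_left_eq_self _ h,
    ← integral_const_mul]
  simp only [h_act, h_sign, mul_assoc]

variable [IsProbabilityMeasure μ]

lemma MemHs.diffQuot_equivariantAverage (hs0 : 0 < s) (hsN : 2 * s < N) (hσ : Continuous σ)
    {Ω : Set (Euc N)} (hv : MemHs N s Ω v) :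
    diffQuot N s (equivariantAverage σ μ v) =ᵐ[volume] fun p =>
      ∫ g, realSign σ g * diffQuot N s v (Prod.map (invAct G g) (invAct G g) p) ∂μ := by
  have h_int : ∀ᵐ x, Integrable (fun g => realSign σ g * v (invAct G g x)) μ := by
    filter_upwards [ae_integrable_comp_action (μ := μ) measurable_invAct measurePreserving_invAct
      (one_le_two.trans (two_lt_twoStar hs0 hsN).le) (hv.memLp hs0 hsN)] with x hx
    exact hx.bdd_mul (c := 1) (continuous_realSign hσ).measurable.aestronglyMeasurable
      (ae_of_all _ fun g => (abs_realSign g).le)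
  filter_upwards [Measure.quasiMeasurePreserving_fst.ae h_int,
    Measure.quasiMeasurePreserving_snd.ae h_int] with p h₁ h₂
  simp only [diffQuot_prodMap_invAct]
  rw [diffQuot, equivariantAverage, equivariantAverage, ← integral_sub h₁ h₂, ← integral_div]
  simp only [← mul_sub, mul_div_assoc]

lemma MemHs.equivariantAverage (hs0 : 0 < s) (hsN : 2 * s < N) (hσ : Continuous σ)
    (hv : MemHs N s Set.univ v) : MemHs N s Set.univ (equivariantAverage σ μ v) := by
  have hε := (continuous_realSign hσ).measurable
  have hε1 (g : G) : |realSign σ g| ≤ 1 := (abs_realSign g).le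
  refine MemHs.of_memLp hs0 hsN (measurable_average measurable_invAct hε hv.meas)
    (memLp_average measurable_invAct measurePreserving_invAct hε hε1
      (one_le_two.trans (two_lt_twoStar hs0 hsN).le) hv.meas (hv.memLp hs0 hsN)) ?_ (by simp)
  refine (memLp_congr_ae (hv.diffQuot_equivariantAverage hs0 hsN hσ)).2 ?_
  simpa using memLp_average (μ := μ) measurable_prodMap_invAct measurePreserving_prodMap_invAct
    hε hε1 one_le_two (measurable_diffQuot hv.meas) hv.memLp_diffQuot_ofReal

lemma IsEquivariant.gagInner_equivariantAverage (hs0 : 0 < s) (hsN : 2 * s < N)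
    (hσ : Continuous σ) {Ω : Set (Euc N)} (hσu : IsEquivariant G σ u) (hu : MemHs N s Ω u)
    (hv : MemHs N s Ω v) :
    gagInner N s u (equivariantAverage σ μ v) = gagInner N s u v := by
  rw [gagInner, gagInner, ← integral_mul_average (μ := μ) measurable_prodMap_invAct
    measurePreserving_prodMap_invAct hσu.realSign_mul_diffQuot (hu.integrable_diffQuot_mul hv)]
  refine integral_congr_ae ?_
  filter_upwards [hv.diffQuot_equivariantAverage (μ := μ) hs0 hsN hσ] with p hp
  rw [hp]

end EquivariantAverage

section LipschitzFunctions

variable {N : ℕ} {s : ℝ} {u : Euc N → ℝ}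

/-- The Lévy kernel `min(|z|², 1) / |z|^(N+2s)`, which dominates the difference quotients of bounded
Lipschitz functions. -/
def levyKernel (N : ℕ) (s : ℝ) (z : Euc N) : ℝ := min (‖z‖ ^ 2) 1 / ‖z‖ ^ ((N : ℝ) + 2 * s)

lemma levyKernel_nonneg (z : Euc N) : 0 ≤ levyKernel N s z :=
  div_nonneg (le_min (sq_nonneg _) zero_le_one) (rpow_nonneg (norm_nonneg _) _)

lemma integrableOn_Ioc_min_sq_div_rpow (hN : 0 < N) (hs1 : s < 1) :
    IntegrableOn (fun y : ℝ => y ^ (N - 1) * (min (y ^ 2) 1 / y ^ ((N : ℝ) + 2 * s)))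
      (Set.Ioc 0 1) := by
  have h : IntegrableOn (fun y : ℝ => y ^ (1 - 2 * s)) (Set.Ioc 0 1) :=
    (intervalIntegrable_iff_integrableOn_Ioc_of_le zero_le_one).1
      (intervalIntegral.intervalIntegrable_rpow' (by linarith))
  refine h.congr_fun (fun y ⟨hy0, hy1⟩ => ?_) measurableSet_Ioc
  simp only [min_eq_left (pow_le_one₀ hy0.le hy1)]
  rw [← rpow_natCast, ← rpow_natCast, Nat.cast_pred hN, ← rpow_sub hy0, ← rpow_add hy0]
  congr 1
  push_cast
  ring

lemma integrableOn_Ioi_min_sq_div_rpow (hN : 0 < N) (hs0 : 0 < s) :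
    IntegrableOn (fun y : ℝ => y ^ (N - 1) * (min (y ^ 2) 1 / y ^ ((N : ℝ) + 2 * s)))
      (Set.Ioi 1) := by
  have h : IntegrableOn (fun y : ℝ => y ^ (-1 - 2 * s)) (Set.Ioi 1) :=
    integrableOn_Ioi_rpow_of_lt (by linarith) one_pos
  refine h.congr_fun (fun y (hy : 1 < y) => ?_) measurableSet_Ioi
  have hy0 : 0 < y := one_pos.trans hy
  simp only [min_eq_right (one_le_pow₀ hy.le)]
  rw [← rpow_natCast, Nat.cast_pred hN, one_div, ← rpow_neg hy0.le, ← rpow_add hy0]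
  congr 1
  ring

lemma integrable_levyKernel (hN : 0 < N) (hs0 : 0 < s) (hs1 : s < 1) :
    Integrable (levyKernel N s) := by
  have : NeZero N := ⟨hN.ne'⟩
  refine (integrable_fun_norm_addHaar volume
    (f := fun y => min (y ^ 2) 1 / y ^ ((N : ℝ) + 2 * s))).2 ?_
  rw [finrank_euclideanSpace_fin, ← Set.Ioc_union_Ioi_eq_Ioi zero_le_one]
  exact (integrableOn_Ioc_min_sq_div_rpow hN hs1).union (integrableOn_Ioi_min_sq_div_rpow hN hs0)

lemma diffQuot_sq_le_levyKernel {C : ℝ} {x y : Euc N} (h_lip : |u x - u y| ≤ C * dist x y)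
    (h_bdd : |u x - u y| ≤ C) : diffQuot N s u (x, y) ^ 2 ≤ C ^ 2 * levyKernel N s (y - x) := by
  rw [diffQuot_sq, levyKernel, ← mul_div_assoc, ← dist_eq_norm',
    mul_min_of_nonneg _ _ (sq_nonneg C), ← mul_pow, mul_one, ← sq_abs (u x - u y)]
  gcongr
  exact le_min (pow_le_pow_left₀ (abs_nonneg _) h_lip 2) (pow_le_pow_left₀ (abs_nonneg _) h_bdd 2)

lemma integrable_diffQuot_sq_of_lipschitzWith {L : NNReal} (hN : 0 < N) (hs0 : 0 < s)
    (hs1 : s < 1) (hu : LipschitzWith L u) (hc : HasCompactSupport u) :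
    Integrable fun p => diffQuot N s u p ^ 2 := by
  obtain ⟨B, hB⟩ := hc.exists_bound_of_continuous hu.continuous
  have hd (x y : Euc N) : diffQuot N s u (x, y) ^ 2 ≤
      max (L : ℝ) (B + B) ^ 2 * levyKernel N s (y - x) := by
    refine diffQuot_sq_le_levyKernel ?_ (((abs_sub _ _).trans (add_le_add (hB x) (hB y))).trans
      (le_max_right _ _))
    exact (hu.dist_le_mul x y).trans (mul_le_mul_of_nonneg_right (le_max_left _ _) dist_nonneg)
  have hK : Integrable ((tsupport u).indicator fun _ => (1 : ℝ)) :=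
    (integrable_indicator_iff (isClosed_tsupport u).measurableSet).2
      (integrableOn_const hc.isCompact.measure_lt_top.ne)
  have h₁ : Integrable fun p : Euc N × Euc N =>
      (tsupport u).indicator (fun _ => (1 : ℝ)) p.1 * levyKernel N s (p.2 - p.1) :=
    (measurePreserving_prod_sub volume volume).integrable_comp_of_integrable
      (hK.mul_prod (integrable_levyKernel hN hs0 hs1))
  refine ((h₁.add h₁.swap).const_mul (max (L : ℝ) (B + B) ^ 2)).mono'
    ((measurable_diffQuot hu.continuous.measurable).pow_const 2).aestronglyMeasurable
    (ae_of_all _ fun ⟨x, y⟩ => ?_)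
  have h_symm : levyKernel N s (x - y) = levyKernel N s (y - x) := by
    rw [levyKernel, levyKernel, norm_sub_rev]
  have hk := levyKernel_nonneg (s := s) (y - x)
  simp only [norm_of_nonneg (sq_nonneg _), Pi.add_apply, Function.comp_apply, Prod.swap, h_symm,
    ← add_mul]
  by_cases hxy : x ∈ tsupport u ∨ y ∈ tsupport u
  · refine (hd x y).trans (mul_le_mul_of_nonneg_left (le_mul_of_one_le_left hk ?_) (sq_nonneg _))
    rcases hxy with h | h <;>
      simp [h, Set.indicator_nonneg]
  · rw [not_or] at hxy
    simp [diffQuot, image_eq_zero_of_notMem_tsupport hxy.1,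
      image_eq_zero_of_notMem_tsupport hxy.2, hxy.1, hxy.2]

lemma memHs_of_lipschitzWith {L : NNReal} (hs0 : 0 < s) (hs1 : s < 1) (hsN : 2 * s < N)
    (hu : LipschitzWith L u) (hc : HasCompactSupport u) : MemHs N s Set.univ u where
  meas := hu.continuous.measurable
  lp := integrable_norm_rpow_of_memLp (twoStar_pos hs0 hsN)
    (hu.continuous.memLp_of_hasCompactSupport hc)
  fin := by
    have hN : 0 < N := Nat.cast_pos.1 ((mul_pos two_pos hs0).trans hsN)
    simpa only [GagFinite, diffQuot_sq] using
      integrable_diffQuot_sq_of_lipschitzWith hN hs0 hs1 hu hc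
  vanish := by simp

end LipschitzFunctions

section Nonempty

variable {N : ℕ} {s : ℝ} {G : Subgroup (ONgrp N)} {σ : G →* ℤˣ} {ξ : Euc N}

lemma exists_pos_forall_dist_invAct_lt (hG : IsClosed (G : Set (ONgrp N))) (hσ : Continuous σ)
    (hξ : ∀ g : G, ogAct (g : ONgrp N) ξ = ξ → σ g = 1) :
    ∃ r > 0, ∀ g, dist (invAct G g ξ) ξ < r → σ g = 1 := by
  have := compactSpace_orthogonalGroup N
  have : CompactSpace G := isCompact_iff_compactSpace.1 hG.isCompact
  have h_compact : IsCompact (σ ⁻¹' {1}ᶜ) := ((isClosed_discrete _).preimage hσ).isCompact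
  have h_cont : Continuous fun g => dist (invAct G g ξ) ξ :=
    (continuous_invAct.uncurry_right ξ).dist continuous_const
  have h_pos (g : G) (hg : g ∈ σ ⁻¹' {1}ᶜ) : 0 < dist (invAct G g ξ) ξ :=
    dist_pos.2 fun h => hg <| by simpa using hξ g⁻¹ h
  obtain ⟨r, hr, hle⟩ := h_compact.exists_forall_le' h_cont.continuousOn h_pos
  exact ⟨r, hr, fun g hg => not_not.1 fun h => hg.not_ge (hle g h)⟩

lemma realSign_mul_of_support_eq_ball {r : ℝ}
    (hr : ∀ g, dist (invAct G g ξ) ξ < 2 * r → σ g = 1) {v : Euc N → ℝ}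
    (hvr : Function.support v = ball ξ r) {x : Euc N} (hx : x ∈ ball ξ r) (g : G) :
    realSign σ g * v (invAct G g x) = v (invAct G g x) := by
  by_cases hg : v (invAct G g x) = 0
  · rw [hg, mul_zero]
  have hgx : invAct G g x ∈ ball ξ r := hvr ▸ Function.mem_support.2 hg
  have h_isom : dist (invAct G g ξ) (invAct G g x) = dist x ξ := by
    rw [invAct, invAct, dist_ogAct, dist_comm]
  have h_dist : dist (invAct G g ξ) ξ < 2 * r := by
    have h_tri := dist_triangle (invAct G g ξ) (invAct G g x) ξ
    rw [mem_ball] at hx hgx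
    linarith
  rw [realSign, hr g h_dist, Units.val_one, Int.cast_one, one_mul]

variable [MeasurableSpace G] [BorelSpace G] {μ : Measure G}

lemma equivariantAverage_pos [IsProbabilityMeasure μ] [μ.IsOpenPosMeasure]
    {r : ℝ} (hr : ∀ g, dist (invAct G g ξ) ξ < 2 * r → σ g = 1) {v : Euc N → ℝ}
    (hv : Continuous v) (hc : HasCompactSupport v) (hv0 : ∀ x, 0 ≤ v x)
    (hvr : Function.support v = ball ξ r) {x : Euc N} (hx : x ∈ ball ξ r) :
    0 < equivariantAverage σ μ v x := by
  obtain ⟨B, hB⟩ := hc.exists_bound_of_continuous hv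
  have h_cont : Continuous fun g : G => v (invAct G g x) :=
    hv.comp (continuous_invAct.uncurry_right x)
  have h_avg : equivariantAverage σ μ v x = ∫ g, v (invAct G g x) ∂μ :=
    integral_congr_ae (ae_of_all _ fun g => realSign_mul_of_support_eq_ball hr hvr hx g)
  have h_int : Integrable (fun g : G => v (invAct G g x)) μ :=
    .of_bound h_cont.measurable.aestronglyMeasurable B (ae_of_all _ fun g => hB _)
  have h_one : invAct G 1 x = x := by rw [invAct, inv_one, Subgroup.coe_one, ogAct_one]
  rw [h_avg]
  refine integral_pos_of_integrable_nonneg_nonzero (x := 1) h_cont h_int (fun g => hv0 _) ?_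
  rw [h_one]
  exact Function.mem_support.1 (hvr ▸ hx)

theorem exists_isEquivariant_not_ae_zero (hs0 : 0 < s) (hs1 : s < 1) (hsN : 2 * s < N)
    (hG : IsClosed (G : Set (ONgrp N))) (hσ : Continuous σ) (hG2 : CondG2 G σ) :
    ∃ u : Euc N → ℝ, MemHs N s Set.univ u ∧ IsEquivariant G σ u ∧ ¬ ∀ᵐ x, u x = 0 := by
  obtain ⟨μ, _, _⟩ := exists_isHaarMeasure_isProbabilityMeasure hG
  obtain ⟨ξ, hξ⟩ := hG2
  obtain ⟨r, hr, hrσ⟩ := exists_pos_forall_dist_invAct_lt hG hσ hξ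
  let b : ContDiffBump ξ := ⟨r / 4, r / 2, by positivity, by linarith⟩
  obtain ⟨L, hL⟩ :=
    (b.contDiff (n := 1)).lipschitzWith_of_hasCompactSupport b.hasCompactSupport one_ne_zero
  refine ⟨equivariantAverage σ μ b, (memHs_of_lipschitzWith hs0 hs1 hsN hL
    b.hasCompactSupport).equivariantAverage hs0 hsN hσ, isEquivariant_equivariantAverage b,
    fun h_zero => (measure_ball_pos volume ξ b.rOut_pos).ne' ?_⟩
  refine measure_mono_null (fun x hx => ?_) (ae_iff.1 h_zero)
  exact (equivariantAverage_pos (r := r / 2) (by simpa [mul_div_cancel₀] using hrσ) b.continuous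
    b.hasCompactSupport (fun _ => b.nonneg) b.support_eq hx).ne'

end Nonempty

section Limits

variable {N : ℕ} {s : ℝ} {G : Subgroup (ONgrp N)} {σ : G →* ℤˣ} {Ω : Set (Euc N)} {A B : ℝ}
  {f : ℕ → Euc N → ℝ} {u g : Euc N → ℝ}

lemma IsEquivariant.sub (hu : IsEquivariant G σ u) (hg : IsEquivariant G σ g) :
    IsEquivariant G σ (u - g) := by
  simpa [sub_eq_add_neg] using hu.add (hg.const_smul (-1))

lemma IsEquivariant.indicator (hu : IsEquivariant G σ u) {T : Set (Euc N)}
    (hT : ∀ (g : G) x, ogAct (g : ONgrp N) x ∈ T ↔ x ∈ T) : IsEquivariant G σ (T.indicator u) :=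
  fun g x => by by_cases hx : x ∈ T <;> simp [hx, hT, hu g x]

lemma IsEquivariant.of_tendsto (hf : ∀ n, IsEquivariant G σ (f n))
    (hlim : ∀ x, Tendsto (fun n => f n x) atTop (𝓝 (u x))) : IsEquivariant G σ u := fun g x =>
  tendsto_nhds_unique (hlim _) <| by simpa only [hf _ g x] using (hlim x).const_mul _

lemma exists_tendsto_ogAct_iff (hf : ∀ n, IsEquivariant G σ (f n)) (g : G) (x : Euc N) :
    (∃ c, Tendsto (fun n => f n (ogAct (g : ONgrp N) x)) atTop (𝓝 c)) ↔
      ∃ c, Tendsto (fun n => f n x) atTop (𝓝 c) := by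
  have h_act (g : G) (x : Euc N) : (∃ c, Tendsto (fun n => f n x) atTop (𝓝 c)) →
      ∃ c, Tendsto (fun n => f n (ogAct (g : ONgrp N) x)) atTop (𝓝 c) := fun ⟨c, hc⟩ =>
    ⟨_, by simpa only [hf _ g x] using hc.const_mul ((σ g : ℤ) : ℝ)⟩
  refine ⟨fun h => ?_, h_act g x⟩
  simpa only [← ogAct_mul, Subgroup.coe_inv, inv_mul_cancel, ogAct_one] using h_act g⁻¹ _ h

lemma exists_isEquivariant_tendsto_ae (hfm : ∀ n, Measurable (f n))
    (hf : ∀ n, IsEquivariant G σ (f n))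
    (hlim : ∀ᵐ x, ∃ c, Tendsto (fun n => f n x) atTop (𝓝 c)) :
    ∃ u : Euc N → ℝ, Measurable u ∧ IsEquivariant G σ u ∧
      ∀ᵐ x, Tendsto (fun n => f n x) atTop (𝓝 (u x)) := by
  set T := {x | ∃ c, Tendsto (fun n => f n x) atTop (𝓝 c)}
  have hTm : MeasurableSet T := measurableSet_exists_tendsto hfm
  have h_conv (x : Euc N) : ∃ c, Tendsto (fun n => T.indicator (f n) x) atTop (𝓝 c) := by
    by_cases hx : x ∈ T
    · simp only [Set.indicator_of_mem hx]
      exact hx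
    · simpa only [Set.indicator_of_notMem hx] using ⟨0, tendsto_const_nhds⟩
  choose u hu using h_conv
  refine ⟨u, measurable_of_tendsto_metrizable (fun n => (hfm n).indicator hTm)
    (tendsto_pi_nhds.2 hu), .of_tendsto (fun n => (hf n).indicator
      (exists_tendsto_ogAct_iff hf)) hu, ?_⟩
  filter_upwards [hlim] with x (hx : x ∈ T)
  simpa only [Set.indicator_of_mem hx] using hu x

lemma tendsto_diffQuot_of_tendsto_ae
    (hlim : ∀ᵐ x, Tendsto (fun n => f n x) atTop (𝓝 (u x))) :
    ∀ᵐ p, Tendsto (fun n => diffQuot N s (f n) p) atTop (𝓝 (diffQuot N s u p)) := by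
  filter_upwards [Measure.quasiMeasurePreserving_fst.ae hlim,
    Measure.quasiMeasurePreserving_snd.ae hlim] with p h₁ h₂
  exact (h₁.sub h₂).div_const _

lemma gagSq_eq_integral_norm_diffQuot_rpow (u : Euc N → ℝ) :
    gagSq N s u = ∫ p, ‖diffQuot N s u p‖ ^ (2 : ℝ) := by
  simp only [gagSq_eq_integral_diffQuot_sq, rpow_two, norm_eq_abs, sq_abs]

lemma MemHs.of_tendsto_ae (hs0 : 0 < s) (hsN : 2 * s < N) (hf : ∀ n, MemHs N s Ω (f n))
    (hA : ∀ n, gagSq N s (f n) ≤ A) (hB : ∀ n, critInt N s (f n) ≤ B) (hu : Measurable u)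
    (hlim : ∀ᵐ x, Tendsto (fun n => f n x) atTop (𝓝 (u x))) : MemHs N s Ω u := by
  have h_diff : MemLp (diffQuot N s u) (.ofReal 2) :=
    memLp_ofReal_of_tendsto_ae two_pos (fun n => (hf n).memLp_diffQuot_ofReal)
      (by simpa only [gagSq_eq_integral_norm_diffQuot_rpow] using hA)
      (tendsto_diffQuot_of_tendsto_ae hlim)
  refine .of_memLp hs0 hsN hu (memLp_ofReal_of_tendsto_ae (twoStar_pos hs0 hsN)
    (fun n => (hf n).memLp hs0 hsN) hB hlim) (by simpa using h_diff) ?_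
  filter_upwards [hlim, ae_all_iff.2 fun n => (hf n).vanish] with x hx h_vanish hxΩ
  exact tendsto_nhds_unique hx (by simp only [h_vanish _ hxΩ, tendsto_const_nhds])

lemma tendsto_critInt_sub_critInt_sub (hs0 : 0 < s) (hsN : 2 * s < N)
    (hf : ∀ n, MemHs N s Ω (f n)) (hB : ∀ n, critInt N s (f n) ≤ B)
    (hlim : ∀ᵐ x, Tendsto (fun n => f n x) atTop (𝓝 (u x))) :
    Tendsto (fun n => critInt N s (f n) - critInt N s (f n - u)) atTop (𝓝 (critInt N s u)) :=
  brezis_lieb (twoStar_pos hs0 hsN) (fun n => (hf n).memLp hs0 hsN) hB hlim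

lemma tendsto_gagSq_sub_gagSq_sub (hf : ∀ n, MemHs N s Ω (f n))
    (hA : ∀ n, gagSq N s (f n) ≤ A)
    (hlim : ∀ᵐ x, Tendsto (fun n => f n x) atTop (𝓝 (u x))) :
    Tendsto (fun n => gagSq N s (f n) - gagSq N s (f n - u)) atTop (𝓝 (gagSq N s u)) := by
  have h_diff (n : ℕ) : diffQuot N s (f n - u) = diffQuot N s (f n) - diffQuot N s u := by
    rw [sub_eq_add_neg, ← neg_one_smul ℝ u, diffQuot_add, diffQuot_const_smul, neg_one_smul,
      ← sub_eq_add_neg]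
  simp only [gagSq_eq_integral_norm_diffQuot_rpow, h_diff] at hA ⊢
  exact brezis_lieb two_pos (fun n => (hf n).memLp_diffQuot_ofReal) hA
    (tendsto_diffQuot_of_tendsto_ae hlim)

end Limits

section Minimization

variable {N : ℕ} {s : ℝ} {G : Subgroup (ONgrp N)} {σ : G →* ℤˣ} {u : Euc N → ℝ}

/-- The `σ`-equivariant functions in `Ḣ^s(ℝ^N)` with unit norm in `L^{2*_s}(ℝ^N)`. -/
def unitFunctions (s : ℝ) (σ : G →* ℤˣ) : Set (Euc N → ℝ) :=
  {u | MemHs N s Set.univ u ∧ IsEquivariant G σ u ∧ critInt N s u = 1}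

/-- The best constant in the Sobolev inequality on `σ`-equivariant functions. -/
def equivSobolevConst (s : ℝ) (σ : G →* ℤˣ) : ℝ := sInf (gagSq N s '' unitFunctions s σ)

lemma bddBelow_gagSq_image (T : Set (Euc N → ℝ)) : BddBelow (gagSq N s '' T) :=
  ⟨0, by rintro _ ⟨u, -, rfl⟩; exact gagSq_nonneg u⟩

lemma normalize_mem_unitFunctions (hs0 : 0 < s) (hsN : 2 * s < N) (hu : MemHs N s Set.univ u)
    (hσu : IsEquivariant G σ u) (hu0 : 0 < critInt N s u) :
    critInt N s u ^ (-(twoStar N s)⁻¹) • u ∈ unitFunctions s σ := by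
  refine ⟨hu.const_smul hs0 hsN _, hσu.const_smul _, ?_⟩
  rw [critInt_const_smul, abs_of_pos (by positivity), ← rpow_mul hu0.le, neg_mul,
    inv_mul_cancel₀ (twoStar_pos hs0 hsN).ne', rpow_neg_one, inv_mul_cancel₀ hu0.ne']

lemma equivSobolevConst_mul_le (hs0 : 0 < s) (hsN : 2 * s < N) (hu : MemHs N s Set.univ u)
    (hσu : IsEquivariant G σ u) :
    equivSobolevConst s σ * critInt N s u ^ (2 / twoStar N s) ≤ gagSq N s u := by
  have hp := twoStar_pos hs0 hsN
  rcases (critInt_nonneg (s := s) u).eq_or_lt with hu0 | hu0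
  · rw [← hu0, zero_rpow (by positivity), mul_zero]
    exact gagSq_nonneg u
  have h_inf : equivSobolevConst s σ ≤ gagSq N s (critInt N s u ^ (-(twoStar N s)⁻¹) • u) :=
    csInf_le (bddBelow_gagSq_image _)
      (Set.mem_image_of_mem _ (normalize_mem_unitFunctions hs0 hsN hu hσu hu0))
  have h_exp : (critInt N s u ^ (-(twoStar N s)⁻¹)) ^ 2 =
      (critInt N s u ^ (2 / twoStar N s))⁻¹ := by
    rw [← rpow_natCast, ← rpow_mul hu0.le, ← rpow_neg hu0.le]
    congr 1
    push_cast
    ring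
  rwa [gagSq_const_smul, h_exp, inv_mul_eq_div, le_div_iff₀ (by positivity)] at h_inf

lemma equivSobolevConst_pos (hs0 : 0 < s) (hsN : 2 * s < N)
    (hne : (unitFunctions s σ).Nonempty) : 0 < equivSobolevConst s σ := by
  obtain ⟨C, hC, h_sobolev⟩ := exists_sobolev (N := N) hs0 hsN
  refine (inv_pos.2 hC).trans_le (le_csInf (hne.image _) ?_)
  rintro _ ⟨u, ⟨hu, -, hu1⟩, rfl⟩
  have h := h_sobolev u hu
  rw [hu1, one_rpow] at h
  rwa [inv_le_iff_one_le_mul₀' hC]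

lemma exists_ball_setIntegral_gt (hs0 : 0 < s) (hsN : 2 * s < N) {A : ℝ} (hA : 0 ≤ A) :
    ∃ M > 0, ∀ u : Euc N → ℝ, MemHs N s Set.univ u → critInt N s u = 1 → gagSq N s u ≤ A →
      ∃ (c : Euc N) (r : ℝ), 0 < r ∧
        M * r ^ (((N : ℝ) + 2 * s) / 2) < ∫ x in ball c r, |u x| := by
  have hp := two_lt_twoStar hs0 hsN
  obtain ⟨C, hC, hrefined⟩ := exists_critInt_le_of_ball_bound (N := N) hs0 hsN
  have h_small : (C * ((C * (A + 1))⁻¹ ^ (twoStar N s - 2)⁻¹) ^ (twoStar N s - 2)) * A < 1 := by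
    rw [rpow_inv_rpow (by positivity) (by linarith), mul_inv, mul_inv_cancel_left₀ hC.ne',
      inv_mul_eq_div, div_lt_one (by linarith)]
    linarith
  refine ⟨(C * (A + 1))⁻¹ ^ (twoStar N s - 2)⁻¹, by positivity, fun u hu hu1 huA => ?_⟩
  by_contra! h
  have h_le := hrefined u _ hu (by positivity) h
  rw [hu1] at h_le
  exact h_small.not_ge (h_le.trans (mul_le_mul_of_nonneg_left huA (by positivity)))

lemma exists_concentrated_rescaling (hs0 : 0 < s) (hsN : 2 * s < N) (hG1 : CondG1 G) {A : ℝ}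
    (hA : 0 ≤ A) : ∃ R M : ℝ, 0 < M ∧ ∀ u ∈ unitFunctions s σ, gagSq N s u ≤ A →
      ∃ v ∈ unitFunctions s σ, gagSq N s v = gagSq N s u ∧ M ≤ ∫ x in ball 0 R, |v x| := by
  obtain ⟨M, hM, h_mass⟩ := exists_ball_setIntegral_gt (N := N) hs0 hsN hA
  obtain ⟨R, h_radius⟩ := exists_norm_le_of_le_setIntegral_ball (σ := σ) hs0 hsN hG1 hM
  refine ⟨R + 1, M, hM, fun u ⟨hu, hσu, hu1⟩ huA => ?_⟩
  obtain ⟨c, r, hr, hcr⟩ := h_mass u hu hu1 huA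
  set ξ := (fixedSpace G).starProjection c
  have hξ : ξ ∈ fixedSpace G := Submodule.starProjection_apply_mem _ _
  have hz : r⁻¹ • (c - ξ) ∈ (fixedSpace G)ᗮ :=
    Submodule.smul_mem _ _ (Submodule.sub_starProjection_mem_orthogonal c)
  have hv := hu.rescale hs0 hsN hr ξ
  have hσv := hσu.rescale (s := s) hξ r
  have hv1 : critInt N s (rescale N s ξ r u) = 1 := by rw [critInt_rescale hsN hr, hu1]
  have h_ball : M ≤ ∫ x in ball (r⁻¹ • (c - ξ)) 1, |rescale N s ξ r u x| := by
    rw [setIntegral_ball_abs_rescale hr, smul_inv_smul₀ hr.ne', add_sub_cancel, rpow_neg hr.le,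
      inv_mul_eq_div, le_div_iff₀ (by positivity)]
    exact hcr.le
  have h_norm := h_radius _ hv hσv hv1.le _ hz h_ball
  refine ⟨_, ⟨hv, hσv, hv1⟩, gagSq_rescale hr u, h_ball.trans ?_⟩
  refine setIntegral_mono_set (hv.integrableOn_ball hs0 hsN 0 _).abs
    (ae_of_all _ fun x => abs_nonneg _) (ball_subset_ball' ?_).eventuallyLE
  rw [dist_zero_right]
  linarith

lemma exists_concentrated_minimizing_seq (hs0 : 0 < s) (hsN : 2 * s < N) (hG1 : CondG1 G)
    (hne : (unitFunctions s σ).Nonempty) : ∃ f : ℕ → Euc N → ℝ, (∀ n, f n ∈ unitFunctions s σ) ∧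
      Tendsto (fun n => gagSq N s (f n)) atTop (𝓝 (equivSobolevConst s σ)) ∧
      ∃ R M : ℝ, 0 < M ∧ ∀ n, M ≤ ∫ x in ball 0 R, |f n x| := by
  obtain ⟨a, ha_anti, ha_lim, ha_mem⟩ :=
    exists_seq_tendsto_sInf (hne.image (gagSq N s)) (bddBelow_gagSq_image _)
  choose w hw hwa using ha_mem
  have hA : 0 ≤ a 0 := hwa 0 ▸ gagSq_nonneg _
  obtain ⟨R, M, hM, h_rescale⟩ := exists_concentrated_rescaling (σ := σ) hs0 hsN hG1 hA
  choose f hf hfw hfM using fun n =>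
    h_rescale (w n) (hw n) ((hwa n).trans_le (ha_anti (Nat.zero_le n)))
  exact ⟨f, hf, ha_lim.congr fun n => by rw [hfw, hwa], R, M, hM, hfM⟩

lemma exists_equivariant_limit (hs0 : 0 < s) (hsN : 2 * s < N) {f : ℕ → Euc N → ℝ} {A : ℝ}
    (hf : ∀ n, f n ∈ unitFunctions s σ) (hA : ∀ n, gagSq N s (f n) ≤ A) {R M : ℝ} (hM : 0 < M)
    (hfM : ∀ n, M ≤ ∫ x in ball 0 R, |f n x|) :
    ∃ φ : ℕ → ℕ, StrictMono φ ∧ ∃ u : Euc N → ℝ, MemHs N s Set.univ u ∧ IsEquivariant G σ u ∧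
      0 < critInt N s u ∧ ∀ᵐ x, Tendsto (fun n => f (φ n) x) atTop (𝓝 (u x)) := by
  obtain ⟨φ, hφ, g, hg, hg_mass⟩ := exists_subseq_tendsto_ae hs0 hsN (fun n => (hf n).1) hA
    fun n => (hf n).2.2.le
  obtain ⟨u, hum, hσu, hlim⟩ := exists_isEquivariant_tendsto_ae (fun n => (hf (φ n)).1.meas)
    (fun n => (hf (φ n)).2.1) (hg.mono fun x hx => ⟨_, hx⟩)
  have hu : MemHs N s Set.univ u := .of_tendsto_ae hs0 hsN (fun n => (hf (φ n)).1)
    (fun n => hA (φ n)) (fun n => (hf (φ n)).2.2.le) hum hlim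
  refine ⟨φ, hφ, u, hu, hσu, (hu.critInt_pos_iff hs0 hsN).2 fun hu0 => ?_, hlim⟩
  have hg0 : ∀ᵐ x, g x = 0 := by
    filter_upwards [hg, hlim, hu0] with x hgx hux hx0
    rw [tendsto_nhds_unique hgx hux, hx0]
  have h_mass : M ≤ ∫ x in ball 0 R, |g x| := ge_of_tendsto' (hg_mass R) fun n => hfM (φ n)
  have h_zero : ∫ x in ball 0 R, |g x| = 0 :=
    integral_eq_zero_of_ae <| ae_restrict_of_ae <| hg0.mono fun x hx => by simp [hx]
  exact (hM.trans_le h_mass).ne' h_zero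

lemma one_lt_rpow_add_rpow {t θ : ℝ} (ht0 : 0 < t) (ht1 : t < 1) (hθ : θ < 1) :
    1 < t ^ θ + (1 - t) ^ θ := by
  have h₁ := rpow_lt_rpow_of_exponent_gt ht0 ht1 hθ
  have h₂ := rpow_lt_rpow_of_exponent_gt (sub_pos.2 ht1) (sub_lt_self 1 ht0) hθ
  rw [rpow_one] at h₁ h₂
  linarith

/-- By strict concavity of `t ↦ t ^ θ`, no mass is lost. -/
lemma eq_one_of_mul_rpow_le {S a t θ : ℝ} (hS : 0 < S) (ht0 : 0 < t) (ht1 : t ≤ 1) (hθ : θ < 1)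
    (h_lim : S * t ^ θ ≤ a) (h_rest : S * (1 - t) ^ θ ≤ S - a) : t = 1 := by
  by_contra h_ne
  have h := mul_lt_mul_of_pos_left (one_lt_rpow_add_rpow ht0 (ht1.lt_of_ne h_ne) hθ) hS
  linarith

lemma mul_critInt_rpow_le_of_tendsto (hs0 : 0 < s) (hsN : 2 * s < N) {f : ℕ → Euc N → ℝ}
    (hf : ∀ n, f n ∈ unitFunctions s σ)
    (hfS : Tendsto (fun n => gagSq N s (f n)) atTop (𝓝 (equivSobolevConst s σ)))
    (hu : MemHs N s Set.univ u) (hσu : IsEquivariant G σ u)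
    (hlim : ∀ᵐ x, Tendsto (fun n => f n x) atTop (𝓝 (u x))) :
    critInt N s u ≤ 1 ∧ equivSobolevConst s σ * (1 - critInt N s u) ^ (2 / twoStar N s) ≤
      equivSobolevConst s σ - gagSq N s u := by
  have hp := twoStar_pos hs0 hsN
  obtain ⟨A, hA⟩ := hfS.bddAbove_range
  have h_gag : Tendsto (fun n => gagSq N s (f n - u)) atTop
      (𝓝 (equivSobolevConst s σ - gagSq N s u)) := by
    simpa using hfS.sub
      (tendsto_gagSq_sub_gagSq_sub (fun n => (hf n).1) (fun n => hA ⟨n, rfl⟩) hlim)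
  have h_crit : Tendsto (fun n => critInt N s (f n - u)) atTop (𝓝 (1 - critInt N s u)) := by
    simpa [(hf _).2.2] using (tendsto_critInt_sub_critInt_sub hs0 hsN (fun n => (hf n).1)
      (fun n => (hf n).2.2.le) hlim).const_sub 1
  refine ⟨sub_nonneg.1 (ge_of_tendsto' h_crit fun n => critInt_nonneg _), ?_⟩
  exact le_of_tendsto_of_tendsto' ((h_crit.rpow_const (Or.inr (by positivity))).const_mul _) h_gag
    fun n => equivSobolevConst_mul_le hs0 hsN ((hf n).1.sub hs0 hsN hu) ((hf n).2.1.sub hσu)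

theorem exists_mem_unitFunctions_gagSq_eq (hs0 : 0 < s) (hsN : 2 * s < N) (hG1 : CondG1 G)
    (hne : (unitFunctions s σ).Nonempty) :
    ∃ u ∈ unitFunctions s σ, gagSq N s u = equivSobolevConst s σ := by
  have hp := two_lt_twoStar hs0 hsN
  have hp0 := twoStar_pos hs0 hsN
  have hS := equivSobolevConst_pos hs0 hsN hne
  obtain ⟨f, hf, hfS, R, M, hM, hfM⟩ := exists_concentrated_minimizing_seq hs0 hsN hG1 hne
  obtain ⟨A, hA⟩ := hfS.bddAbove_range
  obtain ⟨φ, hφ, u, hu, hσu, hu0, hlim⟩ :=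
    exists_equivariant_limit hs0 hsN hf (fun n => hA ⟨n, rfl⟩) hM hfM
  obtain ⟨hu1, h_rest⟩ := mul_critInt_rpow_le_of_tendsto hs0 hsN (fun n => hf (φ n))
    (hfS.comp hφ.tendsto_atTop) hu hσu hlim
  have h_lim := equivSobolevConst_mul_le hs0 hsN hu hσu
  have h_one : critInt N s u = 1 :=
    eq_one_of_mul_rpow_le hS hu0 hu1 ((div_lt_one hp0).2 hp) h_lim h_rest
  rw [h_one, one_rpow, mul_one] at h_lim
  rw [h_one, sub_self, zero_rpow (by positivity), mul_zero] at h_rest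
  exact ⟨u, ⟨hu, hσu, h_one⟩, le_antisymm (sub_nonneg.1 h_rest) h_lim⟩

end Minimization

section EulerLagrange

variable {N : ℕ} {s : ℝ} {Ω : Set (Euc N)} {u v : Euc N → ℝ} {p : ℝ}

lemma abs_rpow_sub_two_mul_self (hp : p ≠ 0) (a : ℝ) : |a| ^ (p - 2) * a * a = |a| ^ p := by
  rcases eq_or_ne a 0 with rfl | ha
  · rw [abs_zero, zero_rpow hp, mul_zero]
  · rw [mul_assoc, ← sq, ← sq_abs, ← rpow_natCast, ← rpow_add (abs_pos.2 ha), Nat.cast_two,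
      sub_add_cancel]

lemma abs_abs_rpow_sub_two_mul (hp : p ≠ 1) (a : ℝ) : |(|a| ^ (p - 2) * a)| = |a| ^ (p - 1) := by
  rcases eq_or_ne a 0 with rfl | ha
  · rw [abs_zero, zero_rpow (sub_ne_zero.2 hp), mul_zero, abs_zero]
  · rw [abs_mul, abs_of_nonneg (by positivity), ← rpow_add_one (abs_pos.2 ha).ne']
    congr 1
    ring

/-- Young's inequality for the exponents `p / (p - 1)` and `p`. -/
lemma mul_abs_abs_rpow_sub_two_mul_mul_le (hp : 1 < p) (a b : ℝ) :
    p * |(|a| ^ (p - 2) * a * b)| ≤ (p - 1) * |a| ^ p + |b| ^ p := by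
  have hp0 : 0 < p := one_pos.trans hp
  have hp1 : p - 1 ≠ 0 := (sub_pos.2 hp).ne'
  have h_young := young_inequality_of_nonneg (abs_nonneg b)
    (show 0 ≤ |a| ^ (p - 1) by positivity) (HolderConjugate.conjExponent hp)
  rw [conjExponent, ← rpow_mul (abs_nonneg a), mul_div_cancel₀ _ hp1] at h_young
  rw [abs_mul, abs_abs_rpow_sub_two_mul hp.ne', mul_comm (|a| ^ (p - 1))]
  refine (mul_le_mul_of_nonneg_left h_young hp0.le).trans_eq ?_
  field_simp
  ring

lemma abs_rpow_add_le_abs_add_rpow (hp : 1 < p) (a b : ℝ) :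
    |a| ^ p + p * (|a| ^ (p - 2) * a * b) ≤ |a + b| ^ p := by
  have h_young := (mul_le_mul_of_nonneg_left (le_abs_self (|a| ^ (p - 2) * a * (a + b)))
    (one_pos.trans hp).le).trans (mul_abs_abs_rpow_sub_two_mul_mul_le hp a (a + b))
  rw [mul_add (|a| ^ (p - 2) * a), abs_rpow_sub_two_mul_self (one_pos.trans hp).ne'] at h_young
  linarith

lemma MemHs.integrable_abs_rpow_sub_two_mul (hs0 : 0 < s) (hsN : 2 * s < N)
    (hu : MemHs N s Ω u) (hv : MemHs N s Ω v) :
    Integrable fun x => |u x| ^ (twoStar N s - 2) * u x * v x := by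
  have hp := two_lt_twoStar hs0 hsN
  refine ((hu.lp.const_mul (twoStar N s - 1)).add hv.lp).mono'
    (((hu.meas.abs.pow_const _).mul hu.meas).mul hv.meas).aestronglyMeasurable
    (ae_of_all _ fun x => ?_)
  refine le_trans ?_ (mul_abs_abs_rpow_sub_two_mul_mul_le (by linarith) (u x) (v x))
  exact le_mul_of_one_le_left (norm_nonneg _) (by linarith)

lemma critInt_add_ge (hs0 : 0 < s) (hsN : 2 * s < N) (hu : MemHs N s Ω u)
    (hv : MemHs N s Ω v) :
    critInt N s u + twoStar N s * ∫ x, |u x| ^ (twoStar N s - 2) * u x * v x ≤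
      critInt N s (u + v) := by
  have hi := (hu.integrable_abs_rpow_sub_two_mul hs0 hsN hv).const_mul (twoStar N s)
  rw [critInt, ← integral_const_mul, ← integral_add hu.lp hi]
  exact integral_mono (hu.lp.add hi) (hu.add hs0 hsN hv).lp fun x =>
    abs_rpow_add_le_abs_add_rpow (one_lt_two.trans (two_lt_twoStar hs0 hsN)) _ _

/-- The first-order condition at `ε = 0`, where both sides of the inequality equal `b`. -/
lemma eq_of_forall_mul_rpow_le {S a b c I : ℝ} (hp : p ≠ 0) (hb : 0 < b)
    (hS : S * b ^ (2 / p) = b)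
    (h : ∀ ε, 0 < b + p * (ε * I) →
      S * (b + p * (ε * I)) ^ (2 / p) ≤ b + 2 * (ε * a) + ε ^ 2 * c) : a = I := by
  set F : ℝ → ℝ := fun ε => b + 2 * (ε * a) + ε ^ 2 * c - S * (b + p * (ε * I)) ^ (2 / p) with hF
  have hF0 : F 0 = 0 := by simp [hF, hS]
  have h_pos : ∀ᶠ ε in 𝓝 (0 : ℝ), 0 < b + p * (ε * I) :=
    Continuous.continuousAt (by fun_prop) |>.eventually (lt_mem_nhds (by simpa using hb))
  have h_min : IsLocalMin F 0 := h_pos.mono fun ε hε => by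
    rw [hF0]
    exact sub_nonneg.2 (h ε hε)
  have h_quad : HasDerivAt (fun ε : ℝ => b + 2 * (ε * a) + ε ^ 2 * c) (2 * a) 0 := by
    have h_lin := (((hasDerivAt_id (0 : ℝ)).mul_const a).const_mul 2).const_add b
    exact (h_lin.add (((hasDerivAt_id (0 : ℝ)).pow 2).mul_const c)).congr_deriv (by simp)
  have h_aff : HasDerivAt (fun ε : ℝ => b + p * (ε * I)) (p * I) 0 := by
    simpa using (((hasDerivAt_id (0 : ℝ)).mul_const I).const_mul p).const_add b
  have h_pow : HasDerivAt (fun ε : ℝ => S * (b + p * (ε * I)) ^ (2 / p)) (2 * I) 0 := by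
    refine ((h_aff.rpow_const (p := 2 / p) (Or.inl (by simpa using hb.ne'))).const_mul
      S).congr_deriv ?_
    have hSb : S * b ^ (2 / p - 1) = 1 := by
      rw [rpow_sub_one hb.ne', ← mul_div_assoc, hS, div_self hb.ne']
    rw [zero_mul, mul_zero, add_zero, mul_left_comm, hSb]
    field_simp
  have h_deriv := h_min.hasDerivAt_eq_zero (h_quad.sub h_pow)
  linarith

end EulerLagrange

section GroundState

variable {N : ℕ} {s : ℝ} {G : Subgroup (ONgrp N)} {σ : G →* ℤˣ} {u v : Euc N → ℝ}

lemma nehariFun_univ (u : Euc N → ℝ) :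
    nehariFun N s Set.univ u = gagSq N s u - critInt N s u := by
  rw [nehariFun, setIntegral_univ, critInt]

lemma energy_univ (u : Euc N → ℝ) : energy N s Set.univ u =
    1 / 2 * gagSq N s u - 1 / twoStar N s * critInt N s u := by
  rw [energy, setIntegral_univ, critInt]

lemma pairing_univ (u v : Euc N → ℝ) : pairing N s Set.univ u v =
    gagInner N s u v - ∫ x, |u x| ^ (twoStar N s - 2) * u x * v x := by
  simp only [pairing, setIntegral_univ, gagInner, diffQuot_mul_diffQuot]

/-- An extremal of the Sobolev inequality on `σ`-equivariant functions, scaled so as to lie on the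
Nehari manifold. -/
structure IsGroundState (s : ℝ) (σ : G →* ℤˣ) (u : Euc N → ℝ) : Prop where
  memHs : MemHs N s Set.univ u
  isEquivariant : IsEquivariant G σ u
  critInt_pos : 0 < critInt N s u
  gagSq_eq : gagSq N s u = critInt N s u
  equivSobolevConst_mul_eq :
    equivSobolevConst s σ * critInt N s u ^ (2 / twoStar N s) = critInt N s u

lemma exists_isGroundState (hs0 : 0 < s) (hsN : 2 * s < N) (hG1 : CondG1 G)
    (hne : (unitFunctions s σ).Nonempty) : ∃ u, IsGroundState s σ u := by
  have hp := two_lt_twoStar hs0 hsN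
  obtain ⟨u, ⟨hu, hσu, hu1⟩, huS⟩ := exists_mem_unitFunctions_gagSq_eq hs0 hsN hG1 hne
  have hS := equivSobolevConst_pos hs0 hsN hne
  set τ := equivSobolevConst s σ ^ (twoStar N s - 2)⁻¹ with hτ_def
  have hτ : 0 < τ := by positivity
  have h_crit : critInt N s (τ • u) = τ ^ twoStar N s := by
    rw [critInt_const_smul, hu1, mul_one, abs_of_pos hτ]
  have h_pow : τ ^ 2 * equivSobolevConst s σ = τ ^ twoStar N s := by
    rw [← rpow_inv_rpow hS.le (sub_pos.2 hp).ne', ← hτ_def, ← rpow_natCast, ← rpow_add hτ,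
      Nat.cast_two, add_sub_cancel]
  refine ⟨τ • u, hu.const_smul hs0 hsN τ, hσu.const_smul τ, ?_, ?_, ?_⟩
  · rw [h_crit]
    positivity
  · rw [gagSq_const_smul, huS, h_crit, h_pow]
  · rw [h_crit, ← rpow_mul hτ.le, mul_div_cancel₀ _ (by linarith), rpow_two, mul_comm, h_pow]

namespace IsGroundState

lemma nehariFun_eq_zero (hu : IsGroundState s σ u) : nehariFun N s Set.univ u = 0 := by
  rw [nehariFun_univ, hu.gagSq_eq, sub_self]

lemma not_ae_eq_zero (hu : IsGroundState s σ u) (hs0 : 0 < s) (hsN : 2 * s < N) :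
    ¬ ∀ᵐ x, u x = 0 :=
  (hu.memHs.critInt_pos_iff hs0 hsN).1 hu.critInt_pos

lemma critInt_le (hu : IsGroundState s σ u) (hs0 : 0 < s) (hsN : 2 * s < N)
    (hv : MemHs N s Set.univ v) (hσv : IsEquivariant G σ v) (hv0 : 0 < critInt N s v)
    (hvN : gagSq N s v = critInt N s v) : critInt N s u ≤ critInt N s v := by
  have hp := two_lt_twoStar hs0 hsN
  have h_exp : 0 < 1 - 2 / twoStar N s := sub_pos.2 ((div_lt_one (by linarith)).2 hp)
  have h_div {b : ℝ} (hb : 0 < b) : b / b ^ (2 / twoStar N s) = b ^ (1 - 2 / twoStar N s) := by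
    rw [rpow_sub hb, rpow_one]
  have hSv := equivSobolevConst_mul_le hs0 hsN hv hσv
  have hSu := hu.equivSobolevConst_mul_eq
  have hu0 := hu.critInt_pos
  rw [hvN, ← le_div_iff₀ (by positivity), h_div hv0] at hSv
  rw [← eq_div_iff (by positivity), h_div hu0] at hSu
  exact (rpow_le_rpow_iff hu0.le hv0.le h_exp).1 (hSu ▸ hSv)

lemma energy_eq_mval (hu : IsGroundState s σ u) (hs0 : 0 < s) (hsN : 2 * s < N) :
    energy N s Set.univ u = mval N s Set.univ G σ := by
  have h_half : 1 / twoStar N s < 1 / 2 :=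
    one_div_lt_one_div_of_lt two_pos (two_lt_twoStar hs0 hsN)
  rw [mval, eq_comm]
  refine IsLeast.csInf_eq ⟨⟨u, hu.memHs, hu.isEquivariant,
    hu.not_ae_eq_zero hs0 hsN, hu.nehariFun_eq_zero, rfl⟩, ?_⟩
  rintro _ ⟨v, hv, hσv, hv0, hvN, rfl⟩
  rw [nehariFun_univ, sub_eq_zero] at hvN
  rw [energy_univ, energy_univ, hu.gagSq_eq, hvN, ← sub_mul, ← sub_mul]
  exact mul_le_mul_of_nonneg_left
    (hu.critInt_le hs0 hsN hv hσv ((hv.critInt_pos_iff hs0 hsN).2 hv0) hvN) (by linarith)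

lemma gagInner_eq (hu : IsGroundState s σ u) (hs0 : 0 < s) (hsN : 2 * s < N)
    (hv : MemHs N s Set.univ v) (hσv : IsEquivariant G σ v) :
    gagInner N s u v = ∫ x, |u x| ^ (twoStar N s - 2) * u x * v x := by
  have hp := twoStar_pos hs0 hsN
  refine eq_of_forall_mul_rpow_le (c := gagSq N s v) hp.ne' hu.critInt_pos
    hu.equivSobolevConst_mul_eq fun ε hε => ?_
  have hεv := hv.const_smul hs0 hsN ε
  have h_quot := equivSobolevConst_mul_le hs0 hsN (hu.memHs.add hs0 hsN hεv)
    (hu.isEquivariant.add (hσv.const_smul ε))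
  rw [gagSq_add hu.memHs hεv, gagInner_const_smul_right, gagSq_const_smul, hu.gagSq_eq] at h_quot
  have h_crit := critInt_add_ge hs0 hsN hu.memHs hεv
  simp only [Pi.smul_apply, smul_eq_mul, mul_left_comm _ ε (v _), integral_const_mul] at h_crit
  have hS : 0 ≤ equivSobolevConst s σ := sInf_nonneg <| by
    rintro _ ⟨w, -, rfl⟩
    exact gagSq_nonneg w
  exact (mul_le_mul_of_nonneg_left (rpow_le_rpow hε.le h_crit (by positivity)) hS).trans h_quot

/-- Symmetric criticality: testing against `v` amounts to testing against its average. -/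
lemma pairing_eq_zero [MeasurableSpace G] [BorelSpace G] (μ : Measure G)
    [IsProbabilityMeasure μ] [μ.IsMulLeftInvariant] (hu : IsGroundState s σ u) (hs0 : 0 < s)
    (hsN : 2 * s < N) (hσ : Continuous σ) (hv : MemHs N s Set.univ v) :
    pairing N s Set.univ u v = 0 := by
  rw [pairing_univ, sub_eq_zero]
  calc gagInner N s u v
      = gagInner N s u (equivariantAverage σ μ v) :=
        (hu.isEquivariant.gagInner_equivariantAverage hs0 hsN hσ hu.memHs hv).symm
    _ = ∫ x, |u x| ^ (twoStar N s - 2) * u x * equivariantAverage σ μ v x :=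
        hu.gagInner_eq hs0 hsN (hv.equivariantAverage hs0 hsN hσ)
          (isEquivariant_equivariantAverage v)
    _ = ∫ x, |u x| ^ (twoStar N s - 2) * u x * v x :=
        integral_mul_average measurable_invAct measurePreserving_invAct
          (hu.isEquivariant.realSign_mul_abs_rpow_mul _)
          (hu.memHs.integrable_abs_rpow_sub_two_mul hs0 hsN hv)

end IsGroundState

end GroundState

theorem statement18_general (N : ℕ) (s : ℝ) (hs0 : 0 < s) (hs1 : s < 1) (hsN : 2 * s < N)
    (G : Subgroup (ONgrp N)) (hGc : IsClosed (G : Set (ONgrp N))) (hG1 : CondG1 G)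
    (σ : G →* ℤˣ) (hσ : Continuous σ) (hG2 : CondG2 G σ) :
    (∃ u : Euc N → ℝ, MemHs N s Set.univ u ∧ IsEquivariant G σ u ∧
      ¬ (∀ᵐ x : Euc N, u x = 0) ∧ nehariFun N s Set.univ u = 0 ∧
      energy N s Set.univ u = mval N s Set.univ G σ) ∧
    (∃ u : Euc N → ℝ, MemHs N s Set.univ u ∧ IsEquivariant G σ u ∧
      ¬ (∀ᵐ x : Euc N, u x = 0) ∧
      ∀ v : Euc N → ℝ, MemHs N s Set.univ v → pairing N s Set.univ u v = 0) := by
  borelize ↥G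
  obtain ⟨μ, _, _⟩ := exists_isHaarMeasure_isProbabilityMeasure hGc
  obtain ⟨w, hw, hσw, hw0⟩ := exists_isEquivariant_not_ae_zero hs0 hs1 hsN hGc hσ hG2
  obtain ⟨u, hu⟩ := exists_isGroundState hs0 hsN hG1
    ⟨_, normalize_mem_unitFunctions hs0 hsN hw hσw ((hw.critInt_pos_iff hs0 hsN).2 hw0)⟩
  have hu0 := hu.not_ae_eq_zero hs0 hsN
  exact ⟨⟨u, hu.memHs, hu.isEquivariant, hu0, hu.nehariFun_eq_zero, hu.energy_eq_mval hs0 hsN⟩,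
    ⟨u, hu.memHs, hu.isEquivariant, hu0, fun v hv => hu.pairing_eq_zero μ hs0 hsN hσ hv⟩⟩

end

/-- the energy attains its minimum on the Nehari manifold `N(ℝ^N)^σ_G`, and
consequently the fractional critical Schrödinger equation has a nontrivial `σ`-equivariant
solution. -/
theorem statement18 (N : ℕ) (s : ℝ) (hN : 2 ≤ N) (hs0 : 0 < s) (hs1 : s < 1)
    (hsN : 2 * s < N)
    (G : Subgroup (ONgrp N)) (hGc : IsClosed (G : Set (ONgrp N)))
    (hG1 : CondG1 G)
    (σ : G →* ℤˣ) (hσ : Continuous σ) (hσs : Function.Surjective σ) (hG2 : CondG2 G σ) :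
    (∃ u : Euc N → ℝ, MemHs N s Set.univ u ∧ IsEquivariant G σ u ∧
      ¬ (∀ᵐ x : Euc N, u x = 0) ∧ nehariFun N s Set.univ u = 0 ∧
      energy N s Set.univ u = mval N s Set.univ G σ) ∧
    (∃ u : Euc N → ℝ, MemHs N s Set.univ u ∧ IsEquivariant G σ u ∧
      ¬ (∀ᵐ x : Euc N, u x = 0) ∧
      ∀ v : Euc N → ℝ, MemHs N s Set.univ v → pairing N s Set.univ u v = 0) :=
  statement18_general N s hs0 hs1 hsN G hGc hG1 σ hσ hG2

end
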